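/- Let RG be a region graph with exactly three terminal vertices (n = 3) satisfying Assumption 1, and suppose RG is terminal-separable. If RG is not feasible, then condition (C-IR) holds. -/

import Mathlib

namespace SumNetworksPaper

/-- `SuperReg Adj Θ R` : `R` belongs to the super region generated by `Θ`:
the smallest set containing `Θ` and containing every vertex whose parent set
is nonempty and entirely contained in the set. -/
inductive SuperReg {V : Type} (Adj : V → V → Prop) (Θ : Set V) : V → Prop
  | base {R : V} : R ∈ Θ → SuperReg Adj Θ R
  | step {R : V} : (∃ P, Adj P R) → (∀ P, Adj P R → SuperReg Adj Θ P) →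
      SuperReg Adj Θ R

/-- The super region `reg(Θ)` as a set. -/
def superReg {V : Type} (Adj : V → V → Prop) (Θ : Set V) : Set V :=
  {R | SuperReg Adj Θ R}

/-- A region graph: a finite directed acyclic simple graph with three source
vertices `S 0, S 1, S 2` (which have no parents) and `n` terminal vertices
`T 0, …, T (n-1)`, in which every non-source vertex has at least two parents.
`Adj P R` means that there is an edge from `P` to `R`, i.e. `P` is a parent of `R`. -/
structure RegionGraph (n : ℕ) where
  V : Type
  fintypeV : Fintype V
  Adj : V → V → Prop
  acyclic : ∀ v : V, ¬ Relation.TransGen Adj v v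
  S : Fin 3 → V
  T : Fin n → V
  S_inj : Function.Injective S
  T_inj : Function.Injective T
  source_no_parent : ∀ (i : Fin 3) (v : V), ¬ Adj v (S i)
  two_parents : ∀ v : V, (∀ i : Fin 3, v ≠ S i) →
    ∃ p q : V, p ≠ q ∧ Adj p v ∧ Adj q v

namespace RegionGraph

variable {n : ℕ} (G : RegionGraph n)

/-- The super region `reg(Θ)`. -/
def reg (Θ : Set G.V) : Set G.V := superReg G.Adj Θ

/-- `reg°(Θ) = reg(Θ) ∖ Θ`. -/
def regO (Θ : Set G.V) : Set G.V := G.reg Θ \ Θ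

/-- `reg(S_i, S_j)`. -/
def regPair (i j : Fin 3) : Set G.V := G.reg {G.S i, G.S j}

/-- `u → v` : there is a directed path from `u` to `v` (possibly trivial). -/
def Reaches (u v : G.V) : Prop := Relation.ReflTransGen G.Adj u v

/-- `Π = reg(S_1,S_2) ∪ reg(S_1,S_3) ∪ reg(S_2,S_3)`. -/
def bigPi : Set G.V := G.regPair 0 1 ∪ G.regPair 0 2 ∪ G.regPair 1 2

/-- `Ω_I` : vertices outside `Π` reaching exactly the terminals `T j`, `j ∈ I`. -/
def Omega (I : Set (Fin n)) : Set G.V :=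
  {R | R ∉ G.bigPi ∧ ∀ j : Fin n, j ∈ I ↔ G.Reaches R (G.T j)}

/-- `Λ_I` : vertices of `Π` having a child in `Ω_I`. -/
def Lambda (I : Set (Fin n)) : Set G.V :=
  {Q | Q ∈ G.bigPi ∧ ∃ R, G.Adj Q R ∧ R ∈ G.Omega I}

/-- Assumption 1: no terminal vertex lies in `Π`. -/
def Assumption1 : Prop := ∀ j : Fin n, G.T j ∉ G.bigPi

/-- Terminal-separability: `Ω_I = ∅` whenever `|I| > 1`. -/
def TerminalSeparable : Prop :=
  ∀ I : Set (Fin n), 1 < I.ncard → G.Omega I = ∅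

/-- A linear code of the region graph over `F`. -/
def IsLinearCode (F : Type) [Field F] (d : G.V → Fin 3 → F) : Prop :=
  (∀ i : Fin 3, d (G.S i) = Pi.single i 1) ∧
  ∀ v : G.V, (∀ i : Fin 3, v ≠ G.S i) →
    d v ∈ Submodule.span F (d '' {p | G.Adj p v})

/-- A linear solution: a linear code giving `ᾱ = (1,1,1)` at every terminal. -/
def IsLinearSolution (F : Type) [Field F] (d : G.V → Fin 3 → F) : Prop :=
  G.IsLinearCode F d ∧ ∀ j : Fin n, d (G.T j) = fun _ => 1

/-- Feasibility: existence of a linear solution over some finite field. -/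
def Feasible : Prop :=
  ∃ (F : Type) (_ : Field F) (_ : Fintype F) (d : G.V → Fin 3 → F),
    G.IsLinearSolution F d

/-- Conditions (1)–(3) on a family `{d_R : R ∈ Π}`. -/
def Conds123 (F : Type) [Field F] (d : G.V → Fin 3 → F) : Prop :=
  (∀ i : Fin 3, d (G.S i) = Pi.single i 1) ∧
  (∀ R ∈ G.bigPi, (∀ i : Fin 3, R ≠ G.S i) →
    d R ∈ Submodule.span F (d '' {p | G.Adj p R})) ∧
  ∀ j : Fin n, (fun _ => (1 : F)) ∈ Submodule.span F (d '' G.Lambda {j})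

/-- `I` is a partition of `Π` into nonempty classes. -/
def IsPartitionOfPi (I : Set (Set G.V)) : Prop :=
  (∀ Δ ∈ I, Δ.Nonempty ∧ Δ ⊆ G.bigPi) ∧
  ⋃₀ I = G.bigPi ∧
  ∀ Δ ∈ I, ∀ Δ' ∈ I, Δ ≠ Δ' → Δ ∩ Δ' = ∅

/-- The three sources lie in three distinct classes of the partition. -/
def SourcesSeparated (I : Set (Set G.V)) : Prop :=
  ∀ Δ ∈ I, ∀ i j : Fin 3, G.S i ∈ Δ → G.S j ∈ Δ → i = j

/-- `[S_i]_i = [S_i]_{i,j₁} ∪ [S_i]_{i,j₂}` for the class `Δ` of `S_i`. -/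
def srcSub (i : Fin 3) (Δ : Set G.V) : Set G.V :=
  Δ ∩ ⋃ (j : Fin 3) (_ : j ≠ i), G.regPair i j

/-- `X` is a subclass of the class `Δ`. -/
def IsSubclass (Δ X : Set G.V) : Prop :=
  (∃ i : Fin 3, G.S i ∈ Δ ∧
    (X = G.srcSub i Δ ∨
      ∃ j k : Fin 3, j ≠ k ∧ j ≠ i ∧ k ≠ i ∧ X = Δ ∩ G.regPair j k)) ∨
  ((∀ i : Fin 3, G.S i ∉ Δ) ∧ ∃ i j : Fin 3, i ≠ j ∧ X = Δ ∩ G.regPair i j)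

/-- The two classes `Δ'`, `Δ''` are connected. -/
def ClassesConnected (Δ' Δ'' : Set G.V) : Prop :=
  (∃ (j : Fin n) (X' X'' : Set G.V),
      G.IsSubclass Δ' X' ∧ G.IsSubclass Δ'' X'' ∧ G.Lambda {j} ⊆ X' ∪ X'') ∨
  ∃ i j : Fin 3, i ≠ j ∧
    (G.reg (Δ' ∩ G.regPair i j) ∩ G.reg (Δ'' ∩ G.regPair i j)).Nonempty

/-- The partition `I` of `Π` is compatible. -/
def Compatible (I : Set (Set G.V)) : Prop :=
  G.SourcesSeparated I ∧
  (∀ Δ' ∈ I, ∀ Δ'' ∈ I, Δ' ≠ Δ'' → ¬ G.ClassesConnected Δ' Δ'') ∧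
  ∀ (j : Fin n) (i₁ i₂ : Fin 3), i₁ ≠ i₂ →
    ∀ Δ₁ ∈ I, ∀ Δ₂ ∈ I, G.S i₁ ∈ Δ₁ → G.S i₂ ∈ Δ₂ →
      ¬ (G.Lambda {j} ⊆ G.srcSub i₁ Δ₁ ∪ G.srcSub i₂ Δ₂ ∪
          ⋃₀ {X : Set G.V | ∃ Δ ∈ I, (∀ i : Fin 3, G.S i ∉ Δ) ∧
                X = Δ ∩ G.regPair i₁ i₂})

/-- `I'` is obtained from `I` by merging two connected classes. -/
def IsContractionStep (I I' : Set (Set G.V)) : Prop :=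
  ∃ Δ' Δ'', Δ' ∈ I ∧ Δ'' ∈ I ∧ Δ' ≠ Δ'' ∧ G.ClassesConnected Δ' Δ'' ∧
    I' = insert (Δ' ∪ Δ'') (I \ {Δ', Δ''})

/-- The trivial partition of `Π` into singletons. -/
def trivialPartition : Set (Set G.V) := {X | ∃ R ∈ G.bigPi, X = {R}}

/-- `Ic` is a character partition of `Π`. -/
def IsCharacterPartition (Ic : Set (Set G.V)) : Prop :=
  ∃ (L : ℕ) (c : ℕ → Set (Set G.V)),
    c 0 = G.trivialPartition ∧ c L = Ic ∧
    (∀ ℓ < L, G.SourcesSeparated (c ℓ) ∧ G.IsContractionStep (c ℓ) (c (ℓ + 1))) ∧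
    ((∃ Δ ∈ Ic, ∃ i j : Fin 3, i ≠ j ∧ G.S i ∈ Δ ∧ G.S j ∈ Δ) ∨
      ∀ Δ' ∈ Ic, ∀ Δ'' ∈ Ic, Δ' ≠ Δ'' → ¬ G.ClassesConnected Δ' Δ'')

/-- Property (a): `d_{Q'} ∈ span{d_Q, ᾱ}` for all `Q, Q'` in the class `Δ`. -/
def PropertyA (F : Type) [Field F] (d : G.V → Fin 3 → F) (Δ : Set G.V) : Prop :=
  ∀ Q ∈ Δ, ∀ Q' ∈ Δ, d Q' ∈ Submodule.span F {d Q, fun _ => (1 : F)}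

end RegionGraph

/-- Condition (C-IR) for a region graph with three terminals. -/
def RegionGraph.CIR (G : RegionGraph 3) : Prop :=
  ∃ (σ τ : Equiv.Perm (Fin 3)) (P₁ P₂ : G.V),
    P₁ ∈ G.regO {G.S (σ 1), G.S (σ 2)} ∧
    P₂ ∈ G.regO {G.S (σ 0), G.S (σ 1)} ∧
    G.Lambda {τ 0} = {G.S (σ 0), P₁} ∧
    G.Lambda {τ 1} = {P₁, P₂} ∧
    G.Lambda {τ 2} ⊆ G.reg {G.S (σ 0), P₂} ∪ G.reg {G.S (σ 0), G.S (σ 2)}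



def det3 {F : Type} [Field F] (a b c : Fin 3 → F) : F :=
  a 0 * (b 1 * c 2 - b 2 * c 1) - a 1 * (b 0 * c 2 - b 2 * c 0) + a 2 * (b 0 * c 1 - b 1 * c 0)

lemma cramer3 {F : Type} [Field F] (a b c : Fin 3 → F) (h : det3 a b c ≠ 0) (x : Fin 3 → F) :
    ∃ p q r : F, x = p • a + q • b + r • c := by
  refine ⟨det3 x b c / det3 a b c, det3 a x c / det3 a b c, det3 a b x / det3 a b c, ?_⟩
  ext i
  simp only [Pi.add_apply, Pi.smul_apply, smul_eq_mul]
  rw [div_mul_eq_mul_div, div_mul_eq_mul_div, div_mul_eq_mul_div, ← add_div, ← add_div,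
    eq_div_iff h]
  unfold det3
  fin_cases i <;> simp <;> ring

/-- the vector of label vector `w` in the plane missing `k` -/
def vec {F : Type} [Field F] (w : Fin 3 → F) (k : Fin 3) : Fin 3 → F := fun i => w i - w k

lemma plane_span {F : Type} [Field F] (a b : Fin 3 → F) (h : det3 a b (fun _ => 1) ≠ 0)
    (k : Fin 3) (x : Fin 3 → F) (hx : x k = 0) :
    ∃ p q : F, x = p • vec a k + q • vec b k := by
  obtain ⟨p, q, r, e⟩ := cramer3 a b _ h x
  refine ⟨p, q, ?_⟩
  have hk := congrFun e k
  simp only [Pi.add_apply, Pi.smul_apply, smul_eq_mul] at hk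
  ext i
  have hi := congrFun e i
  simp only [Pi.add_apply, Pi.smul_apply, smul_eq_mul, vec] at hi ⊢
  rw [hi]
  linear_combination hx - hk

/-- generic weights -/
structure GoodW {V F : Type} [Field F] (S : Fin 3 → V) (w : V → Fin 3 → F) : Prop where
  src : ∀ i, w (S i) = Pi.single i 1
  ind : ∀ x y, x ≠ y → det3 (w x) (w y) (fun _ => 1) ≠ 0
  dist : ∀ x, (∀ i, x ≠ S i) → ∀ k l, k ≠ l → w x k ≠ w x l
  tri : ∀ x : Fin 3 → V, Function.Injective x → (∀ k i, x k = S i → i = k) →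
    det3 (vec (w (x 0)) 0) (vec (w (x 1)) 1) (vec (w (x 2)) 2) ≠ 0

lemma cast_ne {p : ℕ} (z : ℤ) (hz : z ≠ 0) (hb : |z| < p) : (z : ZMod p) ≠ 0 := by
  intro h
  rw [ZMod.intCast_zmod_eq_zero_iff_dvd] at h
  exact hz (Int.eq_zero_of_abs_lt_dvd h hb)

lemma exists_GoodW {V : Type} [Fintype V] (S : Fin 3 → V) (hS : Function.Injective S) :
    ∃ (F : Type) (_ : Field F) (_ : Fintype F) (w : V → Fin 3 → F), GoodW S w := by
  classical
  obtain ⟨n, ⟨e⟩⟩ : ∃ n, Nonempty (V ≃ Fin n) := ⟨_, ⟨Fintype.equivFin V⟩⟩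
  have hn : 0 < n := (e (S 0)).pos
  obtain ⟨p, hp, hpp⟩ := Nat.exists_infinite_primes (100 * n * n + 100)
  have : Fact p.Prime := ⟨hpp⟩
  let t : V → ℤ := fun v => 2 * (n + 1 + (e v : ℕ))
  have ht : ∀ v, 2 * (n : ℤ) + 2 ≤ t v ∧ t v < 4 * n + 2 := fun v => by
    have := (e v).isLt
    simp only [t]; omega
  have htinj : ∀ x y, x ≠ y → t x ≠ t y := fun x y h h' => h (e.injective (by
    ext; simp only [t] at h'; omega))
  have htev : ∀ x, ∃ m, t x = 2 * m := fun x => ⟨_, rfl⟩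
  have hp' : (100 * n * n + 100 : ℤ) ≤ p := by exact_mod_cast hp
  have hn' : (1 : ℤ) ≤ n := by exact_mod_cast hn
  have hpn : (100 * n + 100 : ℤ) ≤ p := by nlinarith
  let w : V → Fin 3 → ZMod p := fun v =>
    if h : ∃ i, v = S i then Pi.single h.choose 1 else ![1, ((t v : ℤ) : ZMod p), 0]
  have hwS : ∀ i, w (S i) = Pi.single i 1 := fun i => by
    have h : ∃ j, S i = S j := ⟨i, rfl⟩
    have h2 : h.choose = i := (hS h.choose_spec).symm
    simp only [w, dif_pos h, h2]
  have hwg : ∀ v, (∀ i, v ≠ S i) → w v = ![1, ((t v : ℤ) : ZMod p), 0] := fun v h => by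
    simp only [w]
    rw [dif_neg (by rintro ⟨i, hi⟩; exact h i hi)]
  have hcase : ∀ v, (∃ i, v = S i) ∨ (∀ i, v ≠ S i) := fun v => by
    by_cases h : ∃ i, v = S i
    · exact Or.inl h
    · exact Or.inr fun i hi => h ⟨i, hi⟩
  have h1 : (1 : ZMod p) ≠ 0 := one_ne_zero
  have h0 : ∀ v, ((t v : ℤ) : ZMod p) ≠ 0 := fun v => cast_ne _ (by have := ht v; omega) (by
    have := ht v; rw [abs_lt]; constructor <;> omega)
  have h01 : ∀ v, ((t v : ℤ) : ZMod p) - 1 ≠ 0 := fun v => by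
    have := cast_ne (p := p) (t v - 1) (by have := ht v; omega) (by
      have := ht v; rw [abs_lt]; constructor <;> omega)
    push_cast at this; exact this
  refine ⟨ZMod p, inferInstance, inferInstance, w, hwS, ?_, ?_, ?_⟩
  · intro x y hxy
    rcases hcase x with ⟨i, rfl⟩ | hx <;> rcases hcase y with ⟨j, rfl⟩ | hy
    · have hij : i ≠ j := fun h => hxy (by rw [h])
      rw [hwS, hwS]
      unfold det3
      fin_cases i <;> fin_cases j <;> simp at hij ⊢
    · rw [hwS, hwg y hy]
      have a := h0 y
      have b := h01 y
      unfold det3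
      fin_cases i <;> simp <;> first | exact a | (intro h; apply b; linear_combination h) |
        (intro h; apply b; linear_combination -h)
    · rw [hwS, hwg x hx]
      have a := h0 x
      have b := h01 x
      unfold det3
      fin_cases j <;> simp <;> first | exact a | (intro h; apply b; linear_combination h) |
        (intro h; apply b; linear_combination -h)
    · rw [hwg x hx, hwg y hy]
      have := cast_ne (p := p) (t x - t y) (by have := htinj x y hxy; omega) (by
        have := ht x; have := ht y; rw [abs_lt]; constructor <;> omega)
      push_cast at this
      unfold det3
      simp
      intro h; apply this; linear_combination -h
  · intro x hx k l hkl
    rw [hwg x hx]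
    have a := h0 x
    have b := h01 x
    have b' : ((t x : ℤ) : ZMod p) ≠ 1 := fun h => b (by rw [h]; ring)
    fin_cases k <;> fin_cases l <;> simp [a, b', b'.symm, a.symm] at hkl ⊢
  · intro x hx hxs
    have hc : ∀ k, x k = S k ∨ (∀ i, x k ≠ S i) := fun k => by
      rcases hcase (x k) with ⟨i, hi⟩ | h
      · left; rw [hi, hxs k i hi]
      · exact Or.inr h
    have key : ∀ z : ℤ, z ≠ 0 → |z| < p → (z : ZMod p) ≠ 0 := fun z => cast_ne z
    have h02 : t (x 0) ≠ t (x 2) := htinj _ _ (fun h => by simpa using hx h)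
    have h12 : t (x 1) ≠ t (x 2) := htinj _ _ (fun h => by simpa using hx h)
    have h01' : t (x 0) ≠ t (x 1) := htinj _ _ (fun h => by simpa using hx h)
    obtain ⟨m0, e0⟩ := htev (x 0)
    obtain ⟨m1, e1⟩ := htev (x 1)
    obtain ⟨m2, e2⟩ := htev (x 2)
    have b0 := ht (x 0)
    have b1 := ht (x 1)
    have b2 := ht (x 2)
    clear_value t
    rcases hc 0 with q0 | q0 <;> rcases hc 1 with q1 | q1 <;> rcases hc 2 with q2 | q2
    all_goals
      first | rw [q0, hwS] | rw [hwg _ q0]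
      first | rw [q1, hwS] | rw [hwg _ q1]
      first | rw [q2, hwS] | rw [hwg _ q2]
      simp [det3, vec]
    all_goals
      generalize t (x 0) = c at *
      generalize t (x 1) = b at *
      generalize t (x 2) = a at *
      clear hwS hwg hc hxs hcase q0 q1 q2 h0 h01 ht htinj htev
      obtain ⟨b01, b02⟩ := b0
      obtain ⟨b11, b12⟩ := b1
      obtain ⟨b21, b22⟩ := b2
      intro h
    · refine key (-2) (by norm_num) (by norm_num; omega) ?_
      push_cast; linear_combination h
    · refine key (1 + a) (by omega) (by rw [abs_lt]; constructor <;> omega) ?_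
      push_cast; linear_combination h
    · refine key (1 - 2 * b) (by omega) (by rw [abs_lt]; constructor <;> omega) ?_
      push_cast; linear_combination h
    · refine key (b - (1 - b) * a) (by nlinarith) (by rw [abs_lt]; constructor <;> nlinarith) ?_
      push_cast; linear_combination h
    · refine key (c - 2) (by omega) (by rw [abs_lt]; constructor <;> omega) ?_
      push_cast; linear_combination h
    · refine key (1 - c + a) (by omega) (by rw [abs_lt]; constructor <;> omega) ?_
      push_cast; linear_combination h
    · refine key ((c - 1) * b + (1 - b)) (by nlinarith) (by rw [abs_lt]; constructor <;> nlinarith) ?_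
      push_cast; linear_combination h
    · refine key (b * (c - 1 - a) + a) ?_ (by rw [abs_lt]; constructor <;> nlinarith) ?_
      · intro hz
        rcases lt_trichotomy (c - 1 - a) (-1) with hm | hm | hm
        · nlinarith
        · rw [hm] at hz; omega
        · nlinarith
      · push_cast; linear_combination -h


namespace RegionGraph

section basics
variable {n : ℕ} (G : RegionGraph n)

lemma adj_wf : WellFounded G.Adj := by
  have := G.fintypeV
  have : IsTrans G.V (Relation.TransGen G.Adj) := ⟨fun _ _ _ => Relation.TransGen.trans⟩
  have : Std.Irrefl (Relation.TransGen G.Adj) := ⟨G.acyclic⟩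
  have h := Finite.wellFounded_of_trans_of_irrefl (Relation.TransGen G.Adj)
  exact Subrelation.wf (fun h => Relation.TransGen.single h) h

def pl (k : Fin 3) : Set G.V := G.reg {v | ∃ i, i ≠ k ∧ v = G.S i}

variable {G}

lemma reg_ind {A B : Set G.V} (h1 : A ⊆ B)
    (h2 : ∀ R, (∃ P, G.Adj P R) → (∀ P, G.Adj P R → P ∈ B) → R ∈ B) : G.reg A ⊆ B := by
  intro R hR
  change SuperReg G.Adj A R at hR
  induction hR with
  | base h => exact h1 h
  | step h _ ih => exact h2 _ h ih

lemma reg_sub {A : Set G.V} : A ⊆ G.reg A := fun _ h => SuperReg.base h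

lemma reg_step {A : Set G.V} {R : G.V} (h : ∃ P, G.Adj P R) (h2 : ∀ P, G.Adj P R → P ∈ G.reg A) :
    R ∈ G.reg A := SuperReg.step h h2

lemma reg_le {A B : Set G.V} (h : A ⊆ G.reg B) : G.reg A ⊆ G.reg B :=
  reg_ind h (fun _ => reg_step)

lemma reg_mono {A B : Set G.V} (h : A ⊆ B) : G.reg A ⊆ G.reg B := reg_le (h.trans reg_sub)

lemma reg_cases {A : Set G.V} {R : G.V} (h : R ∈ G.reg A) :
    R ∈ A ∨ ((∃ P, G.Adj P R) ∧ ∀ P, G.Adj P R → P ∈ G.reg A) := by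
  cases (show SuperReg G.Adj A R from h) with
  | base h => exact Or.inl h
  | step h h2 => exact Or.inr ⟨h, h2⟩

lemma src_reg {A : Set G.V} {i : Fin 3} (h : G.S i ∈ G.reg A) : G.S i ∈ A := by
  rcases reg_cases h with h | ⟨⟨P, hP⟩, _⟩
  · exact h
  · exact absurd hP (G.source_no_parent i P)

lemma reg_empty : G.reg ∅ = ∅ := by
  apply Set.subset_empty_iff.1
  intro R hR
  induction R using G.adj_wf.induction with
  | _ R ih =>
    rcases reg_cases hR with h | ⟨⟨P, hP⟩, h⟩
    · exact h
    · exact absurd (ih P hP (h P hP)) (by simp)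

lemma reg_singleton {X R : G.V} (h : R ∈ G.reg {X}) : R = X := by
  induction R using G.adj_wf.induction with
  | _ R ih =>
    rcases reg_cases h with h | ⟨⟨P, hP⟩, h⟩
    · exact h
    · by_cases hs : ∀ i, R ≠ G.S i
      · obtain ⟨p, q, hpq, hp, hq⟩ := G.two_parents R hs
        exact absurd ((ih p hp (h p hp)).trans (ih q hq (h q hq)).symm) hpq
      · push Not at hs
        obtain ⟨i, rfl⟩ := hs
        exact absurd hP (G.source_no_parent i P)

lemma reg_subsingleton {A : Set G.V} (hA : A.Subsingleton) : G.reg A ⊆ A := by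
  rcases hA.eq_empty_or_singleton with h | ⟨x, h⟩
  · rw [h, reg_empty]
  · rw [h]; intro R hR; exact reg_singleton hR

lemma src_pl {i k : Fin 3} : G.S i ∈ G.pl k ↔ i ≠ k := by
  constructor
  · intro h
    obtain ⟨j, hj, e⟩ := src_reg h
    rwa [G.S_inj e]
  · intro h
    exact reg_sub ⟨i, h, rfl⟩

lemma reg_pl {A : Set G.V} {k : Fin 3} (h : A ⊆ G.pl k) : G.reg A ⊆ G.pl k := reg_le h

lemma pl_parent {k : Fin 3} {R P : G.V} (h : R ∈ G.pl k) (hP : G.Adj P R) : P ∈ G.pl k := by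
  rcases reg_cases h with ⟨i, _, rfl⟩ | ⟨_, h⟩
  · exact absurd hP (G.source_no_parent i P)
  · exact h P hP

lemma pl_inter {k l : Fin 3} (hkl : k ≠ l) {R : G.V} (h : R ∈ G.pl k) (h' : R ∈ G.pl l) :
    ∃ i, R = G.S i := by
  have key : ∀ R, R ∈ G.pl k → R ∈ G.pl l → ∃ i, i ≠ k ∧ i ≠ l ∧ R = G.S i := by
    intro R
    induction R using G.adj_wf.induction with
    | _ R ih =>
      intro h h'
      by_cases hs : ∀ i, R ≠ G.S i
      · exfalso
        obtain ⟨p, q, hpq, hp, hq⟩ := G.two_parents R hs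
        obtain ⟨i, a1, a2, e1⟩ := ih p hp (pl_parent h hp) (pl_parent h' hp)
        obtain ⟨j, b1, b2, e2⟩ := ih q hq (pl_parent h hq) (pl_parent h' hq)
        have : i = j := by omega
        exact hpq (by rw [e1, e2, this])
      · push Not at hs
        obtain ⟨i, rfl⟩ := hs
        exact ⟨i, src_pl.1 h, src_pl.1 h', rfl⟩
  obtain ⟨i, _, _, e⟩ := key R h h'
  exact ⟨i, e⟩

lemma pl_eq {i j k : Fin 3} (h1 : i ≠ j) (h2 : i ≠ k) (h3 : j ≠ k) :
    G.reg {G.S i, G.S j} = G.pl k := by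
  unfold pl
  congr 1
  ext v
  simp only [Set.mem_insert_iff, Set.mem_singleton_iff, Set.mem_ofPred_eq]
  constructor
  · rintro (h | h)
    · exact ⟨i, h2, h⟩
    · exact ⟨j, h3, h⟩
  · rintro ⟨l, hl, rfl⟩
    have : l = i ∨ l = j := by omega
    rcases this with rfl | rfl <;> simp

lemma mem_bigPi {R : G.V} : R ∈ G.bigPi ↔ ∃ k, R ∈ G.pl k := by
  unfold bigPi regPair
  rw [pl_eq (k := 2) (by decide) (by decide) (by decide),
    pl_eq (k := 1) (by decide) (by decide) (by decide),
    pl_eq (k := 0) (by decide) (by decide) (by decide)]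
  simp only [Set.mem_union, Fin.exists_fin_succ, Fin.exists_fin_zero]
  constructor
  · rintro ((h | h) | h)
    · right; right; left; exact h
    · right; left; exact h
    · left; exact h
  · rintro (h | h | h | h)
    · right; exact h
    · left; right; exact h
    · left; left; exact h
    · exact h.elim

lemma src_bigPi (i : Fin 3) : G.S i ∈ G.bigPi := by
  rw [mem_bigPi]
  fin_cases i
  · exact ⟨1, src_pl.2 (by decide)⟩
  · exact ⟨0, src_pl.2 (by decide)⟩
  · exact ⟨0, src_pl.2 (by decide)⟩

lemma omega_of_reach (hTS : G.TerminalSeparable) {R : G.V} {j : Fin n} (h : R ∉ G.bigPi)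
    (hr : G.Reaches R (G.T j)) : R ∈ G.Omega {j} := by
  refine ⟨h, fun l => ⟨fun e => by rw [Set.mem_singleton_iff.1 e]; exact hr, fun hl => ?_⟩⟩
  by_contra hne
  have hne : l ≠ j := hne
  let I : Set (Fin n) := {l | G.Reaches R (G.T l)}
  have hI : 1 < I.ncard := by
    rw [Set.one_lt_ncard_iff]
    exact ⟨l, j, hl, hr, hne⟩
  have := hTS I hI
  exact absurd (show R ∈ G.Omega I from ⟨h, fun _ => Iff.rfl⟩) (by rw [this]; simp)

lemma T_omega (hA : G.Assumption1) (hTS : G.TerminalSeparable) (j : Fin n) :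
    G.T j ∈ G.Omega {j} := omega_of_reach hTS (hA j) Relation.ReflTransGen.refl

lemma omega_parent (hTS : G.TerminalSeparable) {R P : G.V} {j : Fin n}
    (h : R ∈ G.Omega {j}) (hP : G.Adj P R) : P ∈ G.Lambda {j} ∨ P ∈ G.Omega {j} := by
  by_cases hp : P ∈ G.bigPi
  · exact Or.inl ⟨hp, R, hP, h⟩
  · exact Or.inr (omega_of_reach hTS hp (Relation.ReflTransGen.head hP ((h.2 j).1 rfl)))

lemma not_src_of_not_bigPi {R : G.V} (h : R ∉ G.bigPi) (i : Fin 3) : R ≠ G.S i := by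
  rintro rfl; exact h (src_bigPi i)

/-- `Λ_j` is not coplanar. -/
lemma lambda_nc (hA : G.Assumption1) (hTS : G.TerminalSeparable) (j : Fin n) (k : Fin 3) :
    ¬ G.Lambda {j} ⊆ G.pl k := by
  intro hsub
  have : ∀ R, R ∈ G.Omega {j} → R ∈ G.pl k := by
    intro R
    induction R using G.adj_wf.induction with
    | _ R ih =>
      intro hR
      obtain ⟨p, q, hpq, hp, hq⟩ := G.two_parents R (not_src_of_not_bigPi hR.1)
      refine reg_step ⟨p, hp⟩ (fun P hP => ?_)
      rcases omega_parent hTS hR hP with h | h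
      · exact hsub h
      · exact ih P hP h
  exact hA j (mem_bigPi.2 ⟨k, this _ (T_omega hA hTS j)⟩)

lemma extend (hA : G.Assumption1) (hTS : G.TerminalSeparable) (j : Fin n)
    {F : Type} [Field F] (d0 : G.V → Fin 3 → F) (a : Fin 3 → F)
    (ha : a ∈ Submodule.span F (d0 '' G.Lambda {j})) :
    ∃ d : G.V → Fin 3 → F, (∀ v ∈ G.bigPi, d v = d0 v) ∧
      (∀ v ∈ G.Omega {j}, d v ∈ Submodule.span F (d '' {p | G.Adj p v})) ∧ d (G.T j) = a := by
  classical
  have := G.fintypeV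
  -- next vertex
  have hnx : ∀ v : G.V, ∃ u, ((v ∈ G.Omega {j} ∧ v ≠ G.T j) ∨ v ∈ G.Lambda {j}) →
      G.Adj v u ∧ u ∈ G.Omega {j} := by
    intro v
    by_cases h1 : v ∈ G.Lambda {j}
    · obtain ⟨u, hu⟩ := h1.2
      exact ⟨u, fun _ => hu⟩
    by_cases h2 : v ∈ G.Omega {j} ∧ v ≠ G.T j
    · have hr := (h2.1.2 j).1 rfl
      rcases Relation.ReflTransGen.cases_head hr with h | ⟨u, hu, hu2⟩
      · exact absurd h h2.2
      · refine ⟨u, fun _ => ⟨hu, omega_of_reach hTS (fun hp => ?_) hu2⟩⟩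
        obtain ⟨k, hk⟩ := mem_bigPi.1 hp
        exact h2.1.1 (mem_bigPi.2 ⟨k, pl_parent hk hu⟩)
    · exact ⟨v, fun h => by tauto⟩
  choose nx hnx using hnx
  have hc : ∃ c : G.V → F, ∑ q ∈ Finset.univ.filter (· ∈ G.Lambda {j}), c q • d0 q = a := by
    have h2 : d0 '' G.Lambda {j} =
        d0 '' ((Finset.univ.filter (· ∈ G.Lambda {j}) : Finset G.V) : Set G.V) := by
      congr 1; ext; simp
    rw [h2] at ha
    exact (Submodule.mem_span_image_finset_iff_exists_fun' F).1 ha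
  obtain ⟨c, hc⟩ := hc
  have hd : ∃ d : G.V → Fin 3 → F, ∀ v, d v = if v ∈ G.bigPi then d0 v else
      ∑ u ∈ Finset.univ.filter (fun u => u ∈ G.Omega {j} ∧ u ≠ G.T j ∧ nx u = v ∧ G.Adj u v), d u +
      ∑ q ∈ Finset.univ.filter (fun q => q ∈ G.Lambda {j} ∧ nx q = v), c q • d0 q := by
    refine ⟨G.adj_wf.fix (C := fun _ => Fin 3 → F) (fun v rec => if v ∈ G.bigPi then d0 v else
      ∑ u ∈ (Finset.univ.filter (fun u => u ∈ G.Omega {j} ∧ u ≠ G.T j ∧ nx u = v ∧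
        G.Adj u v)).attach, rec u.1 (Finset.mem_filter.1 u.2).2.2.2.2 +
      ∑ q ∈ Finset.univ.filter (fun q => q ∈ G.Lambda {j} ∧ nx q = v), c q • d0 q), fun v => ?_⟩
    rw [WellFounded.fix_eq]
    congr 2
    exact Finset.sum_attach _ (fun u => G.adj_wf.fix (C := fun _ => Fin 3 → F) _ u)
  obtain ⟨d, hd⟩ := hd
  have hd0 : ∀ v ∈ G.bigPi, d v = d0 v := fun v hv => by rw [hd, if_pos hv]
  have hd1 : ∀ v ∈ G.Omega {j}, d v =
      ∑ u ∈ (Finset.univ.filter (fun u => u ∈ G.Omega {j} ∧ u ≠ G.T j)).filter (fun u => nx u = v),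
        d u +
      ∑ q ∈ (Finset.univ.filter (fun q => q ∈ G.Lambda {j})).filter (fun q => nx q = v),
        c q • d0 q := by
    intro v hv
    rw [hd v, if_neg hv.1, Finset.filter_filter, Finset.filter_filter]
    congr 2
    ext u
    simp only [Finset.mem_filter, Finset.mem_univ, true_and]
    constructor
    · rintro ⟨h1, h2, h3, h4⟩; exact ⟨⟨h1, h2⟩, h3⟩
    · rintro ⟨⟨h1, h2⟩, h3⟩; exact ⟨h1, h2, h3, h3 ▸ (hnx u (Or.inl ⟨h1, h2⟩)).1⟩
  refine ⟨d, hd0, ?_, ?_⟩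
  · intro v hv
    rw [hd1 v hv]
    refine Submodule.add_mem _ (Submodule.sum_mem _ fun u hu => ?_)
      (Submodule.sum_mem _ fun q hq => ?_)
    · simp only [Finset.mem_filter, Finset.mem_univ, true_and] at hu
      exact Submodule.subset_span ⟨u, hu.2 ▸ (hnx u (Or.inl hu.1)).1, rfl⟩
    · simp only [Finset.mem_filter, Finset.mem_univ, true_and] at hq
      refine Submodule.smul_mem _ _ (Submodule.subset_span
        ⟨q, hq.2 ▸ (hnx q (Or.inr hq.1)).1, hd0 q hq.1.1⟩)
  · have hsum : ∑ v ∈ Finset.univ.filter (· ∈ G.Omega {j}), d v =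
        ∑ u ∈ Finset.univ.filter (fun u => u ∈ G.Omega {j} ∧ u ≠ G.T j), d u + a := by
      rw [Finset.sum_congr rfl (fun v hv => hd1 v (by simpa using hv)), Finset.sum_add_distrib,
        Finset.sum_fiberwise_of_maps_to (g := nx), Finset.sum_fiberwise_of_maps_to (g := nx), hc]
      · intro q hq
        simp only [Finset.mem_filter, Finset.mem_univ, true_and] at hq ⊢
        exact (hnx q (Or.inr hq)).2
      · intro u hu
        simp only [Finset.mem_filter, Finset.mem_univ, true_and] at hu ⊢
        exact (hnx u (Or.inl hu)).2
    have hT := T_omega hA hTS j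
    have h3 : Finset.univ.filter (fun u => u ∈ G.Omega {j} ∧ u ≠ G.T j) =
        (Finset.univ.filter (· ∈ G.Omega {j})).erase (G.T j) := by
      ext u; simp [and_comm]
    rw [h3, ← Finset.add_sum_erase _ _ (show G.T j ∈ Finset.univ.filter (· ∈ G.Omega {j}) by
      simpa using hT), add_comm] at hsum
    exact add_left_cancel hsum

lemma feasible_of_pi (hA : G.Assumption1) (hTS : G.TerminalSeparable)
    {F : Type} [Field F] [Fintype F] (d0 : G.V → Fin 3 → F)
    (hS : ∀ i, d0 (G.S i) = Pi.single i 1)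
    (hp : ∀ v ∈ G.bigPi, (∀ i, v ≠ G.S i) → d0 v ∈ Submodule.span F (d0 '' {p | G.Adj p v}))
    (ht : ∀ j : Fin n, (fun _ => (1 : F)) ∈ Submodule.span F (d0 '' G.Lambda {j})) :
    G.Feasible := by
  classical
  choose D hD1 hD2 hD3 using fun j => extend hA hTS j d0 _ (ht j)
  let d : G.V → Fin 3 → F := fun v => if v ∈ G.bigPi then d0 v else
    if h : ∃ j, v ∈ G.Omega {j} then D h.choose v else 0
  have hdp : ∀ v ∈ G.bigPi, d v = d0 v := fun v hv => if_pos hv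
  have hdo : ∀ j, ∀ v ∈ G.Omega {j}, d v = D j v := by
    intro j v hv
    have h : ∃ j, v ∈ G.Omega {j} := ⟨j, hv⟩
    have e : h.choose = j := (hv.2 h.choose).2 ((h.choose_spec.2 h.choose).1 rfl)
    simp only [d, if_neg hv.1, dif_pos h, e]
  have himg : ∀ (e : G.V → Fin 3 → F) v, (∀ p, G.Adj p v → d p = e p) →
      d '' {p | G.Adj p v} = e '' {p | G.Adj p v} := by
    intro e v h
    exact Set.image_congr (fun p hp => h p hp)
  refine ⟨F, inferInstance, inferInstance, d, ⟨⟨fun i => ?_, fun v hv => ?_⟩, fun j => ?_⟩⟩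
  · rw [hdp _ (src_bigPi i), hS]
  · by_cases h1 : v ∈ G.bigPi
    · rw [hdp v h1, himg d0]
      · exact hp v h1 hv
      · intro p hp
        obtain ⟨k, hk⟩ := mem_bigPi.1 h1
        exact hdp p (mem_bigPi.2 ⟨k, pl_parent hk hp⟩)
    by_cases h2 : ∃ j, v ∈ G.Omega {j}
    · obtain ⟨j, hj⟩ := h2
      rw [hdo j v hj, himg (D j)]
      · exact hD2 j v hj
      · intro p hp
        rcases omega_parent hTS hj hp with h | h
        · rw [hdp p h.1, hD1 j p h.1]
        · exact hdo j p h
    · have : d v = 0 := by simp only [d, if_neg h1, dif_neg h2]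
      rw [this]; exact Submodule.zero_mem _
  · rw [hdo j _ (T_omega hA hTS j), hD3]

end basics
end RegionGraph

namespace RegionGraph

section labels
variable {n : ℕ} {G : RegionGraph n}

/-- sufficient conditions for decodability under a labelling -/
def GoodL (G : RegionGraph n) (φ : G.V → G.V) (L : Set G.V) : Prop :=
  (∃ k l X Y, k ≠ l ∧ X ∈ L ∧ Y ∈ L ∧ X ∈ G.pl k ∧ Y ∈ G.pl l ∧ φ X = φ Y ∧
    ∀ i, φ X = G.S i → i = k ∨ i = l) ∨
  (∃ k l X Y Z, k ≠ l ∧ X ∈ L ∧ Y ∈ L ∧ Z ∈ L ∧ X ∈ G.pl k ∧ Y ∈ G.pl k ∧ Z ∈ G.pl l ∧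
    φ X ≠ φ Y ∧ ∀ i, φ Z = G.S i → i = k ∨ i = l) ∨
  (∃ X : Fin 3 → G.V, (∀ k, X k ∈ L ∧ X k ∈ G.pl k) ∧ Function.Injective (fun k => φ (X k)) ∧
    ∀ k i, φ (X k) = G.S i → i = k)

lemma realize (hA : G.Assumption1) (hTS : G.TerminalSeparable) (φ : G.V → G.V)
    (h1 : ∀ i, φ (G.S i) = G.S i)
    (h2 : ∀ R ∈ G.bigPi, (∀ i, R ≠ G.S i) →
      (∃ X Y, G.Adj X R ∧ G.Adj Y R ∧ φ X ≠ φ Y) ∨ ∃ X, G.Adj X R ∧ φ X = φ R)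
    (h3 : ∀ j, GoodL G φ (G.Lambda {j})) : G.Feasible := by
  classical
  have := G.fintypeV
  obtain ⟨F, _, _, w, hw⟩ := exists_GoodW G.S G.S_inj
  let d : G.V → Fin 3 → F := fun v =>
    if h : ∃ k, v ∈ G.pl k then vec (w (φ v)) h.choose else 0
  have hd : ∀ k v, v ∈ G.pl k → d v = vec (w (φ v)) k := by
    intro k v hv
    have h : ∃ k, v ∈ G.pl k := ⟨k, hv⟩
    have e : d v = vec (w (φ v)) h.choose := by simp only [d, dif_pos h]
    by_cases hk : h.choose = k
    · rw [e, hk]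
    · obtain ⟨i, rfl⟩ := pl_inter hk h.choose_spec hv
      have a1 := src_pl.1 hv
      have a2 := src_pl.1 h.choose_spec
      rw [e, h1, hw.src]
      ext m
      simp [vec, Pi.single_apply, a1.symm, a2.symm]
  have hdS : ∀ i, d (G.S i) = Pi.single i 1 := by
    intro i
    obtain ⟨k, hk⟩ := mem_bigPi.1 (src_bigPi (G := G) i)
    have a1 := src_pl.1 hk
    rw [hd k _ hk, h1, hw.src]
    ext m
    simp [vec, Pi.single_apply, a1.symm]
  have hwne : ∀ x k l, k ≠ l → (∀ i, x = G.S i → i = k ∨ i = l) → w x k - w x l ≠ 0 := by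
    intro x k l hkl hx
    by_cases hs : ∀ i, x ≠ G.S i
    · exact sub_ne_zero.2 (hw.dist x hs k l hkl)
    · push Not at hs
      obtain ⟨i, rfl⟩ := hs
      rw [hw.src]
      rcases hx i rfl with rfl | rfl
      · simp [Pi.single_apply, hkl.symm]
      · simp [Pi.single_apply, hkl]
  refine feasible_of_pi hA hTS d hdS ?_ ?_
  · intro v hv hvs
    obtain ⟨k, hk⟩ := mem_bigPi.1 hv
    rcases h2 v hv hvs with ⟨X, Y, hX, hY, hne⟩ | ⟨X, hX, he⟩
    · obtain ⟨p, q, e⟩ := plane_span _ _ (hw.ind _ _ hne) k (d v)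
        (by rw [hd k v hk]; simp [vec])
      rw [e, ← hd k X (pl_parent hk hX), ← hd k Y (pl_parent hk hY)]
      exact Submodule.add_mem _ (Submodule.smul_mem _ _ (Submodule.subset_span ⟨X, hX, rfl⟩))
        (Submodule.smul_mem _ _ (Submodule.subset_span ⟨Y, hY, rfl⟩))
    · refine Submodule.subset_span ⟨X, hX, ?_⟩
      rw [hd k v hk, hd k X (pl_parent hk hX), he]
  · intro j
    have hsp : ∀ X ∈ G.Lambda {j}, d X ∈ Submodule.span F (d '' G.Lambda {j}) :=
      fun X hX => Submodule.subset_span ⟨X, hX, rfl⟩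
    rcases h3 j with ⟨k, l, X, Y, hkl, hX, hY, hXk, hYl, he, hs⟩ |
      ⟨k, l, X, Y, Z, hkl, hX, hY, hZ, hXk, hYk, hZl, hne, hs⟩ | ⟨X, hX, hinj, hs⟩
    · have hne := hwne (φ X) k l hkl hs
      have : (fun _ => (1 : F)) = (w (φ X) k - w (φ X) l)⁻¹ • (d Y - d X) := by
        rw [hd k X hXk, hd l Y hYl, ← he]
        ext m
        simp only [vec, Pi.smul_apply, Pi.sub_apply, smul_eq_mul]
        field_simp
        ring
      rw [this]
      exact Submodule.smul_mem _ _ (Submodule.sub_mem _ (hsp Y hY) (hsp X hX))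
    · have hne' := hwne (φ Z) k l hkl hs
      set u := w (φ Z) k - w (φ Z) l with hu
      have hZu : d Z k = u := by rw [hd l Z hZl]; rfl
      obtain ⟨p, q, e⟩ := plane_span _ _ (hw.ind _ _ hne) k ((fun _ => 1) - u⁻¹ • d Z)
        (by simp only [Pi.sub_apply, Pi.smul_apply, smul_eq_mul, hZu]
            rw [inv_mul_cancel₀ hne', sub_self])
      rw [sub_eq_iff_eq_add] at e
      rw [e, ← hd k X hXk, ← hd k Y hYk]
      exact Submodule.add_mem _ (Submodule.add_mem _ (Submodule.smul_mem _ _ (hsp X hX))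
        (Submodule.smul_mem _ _ (hsp Y hY))) (Submodule.smul_mem _ _ (hsp Z hZ))
    · have hdet := hw.tri (fun k => φ (X k)) hinj hs
      simp only [← hd _ _ (hX _).2] at hdet
      obtain ⟨p, q, r, e⟩ := cramer3 _ _ _ hdet (fun _ => 1)
      rw [e]
      exact Submodule.add_mem _ (Submodule.add_mem _ (Submodule.smul_mem _ _ (hsp _ (hX 0).1))
        (Submodule.smul_mem _ _ (hsp _ (hX 1).1))) (Submodule.smul_mem _ _ (hsp _ (hX 2).1))

/-- plane-wise closure of a class -/
def Cl (G : RegionGraph n) (C : Set G.V) : Set G.V := {R | ∃ k, R ∈ G.reg (C ∩ G.pl k)}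

lemma Cl_pl {C : Set G.V} {R : G.V} {k : Fin 3} (h : R ∈ G.Cl C) (hk : R ∈ G.pl k) :
    R ∈ G.reg (C ∩ G.pl k) := by
  obtain ⟨l, hl⟩ := h
  by_cases e : l = k
  · rwa [← e]
  · obtain ⟨i, rfl⟩ := pl_inter e (reg_pl Set.inter_subset_right hl) hk
    exact reg_sub ⟨(src_reg hl).1, hk⟩

lemma sub_Cl {C : Set G.V} (hC : C ⊆ G.bigPi) : C ⊆ G.Cl C := by
  intro R hR
  obtain ⟨k, hk⟩ := mem_bigPi.1 (hC hR)
  exact ⟨k, reg_sub ⟨hR, hk⟩⟩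

lemma src_Cl {C : Set G.V} {i : Fin 3} (h : G.S i ∈ G.Cl C) : G.S i ∈ C := by
  obtain ⟨l, hl⟩ := h
  exact (src_reg hl).1

lemma exists_label (𝒞 : Set (Set G.V)) (hP : ∀ C ∈ 𝒞, C ⊆ G.bigPi) (hne : ∀ C ∈ 𝒞, C.Nonempty)
    (hs : ∀ C ∈ 𝒞, ∀ i j, G.S i ∈ C → G.S j ∈ C → i = j)
    (hdisj : ∀ C ∈ 𝒞, ∀ D ∈ 𝒞, ∀ X, X ∈ G.Cl C → X ∈ G.Cl D → C = D) :
    ∃ φ : G.V → G.V, (∀ i, φ (G.S i) = G.S i) ∧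
      (∀ R ∈ G.bigPi, (∀ i, R ≠ G.S i) →
        (∃ X Y, G.Adj X R ∧ G.Adj Y R ∧ φ X ≠ φ Y) ∨ ∃ X, G.Adj X R ∧ φ X = φ R) ∧
      (∀ C ∈ 𝒞, ∀ X ∈ G.Cl C, ∀ Y ∈ G.Cl C, φ X = φ Y) ∧
      (∀ X Y, φ X = φ Y → X = Y ∨ ∃ C ∈ 𝒞, X ∈ G.Cl C ∧ Y ∈ G.Cl C) := by
  classical
  have hrep : ∀ C : Set G.V, ∃ q, C ∈ 𝒞 → q ∈ C ∧ ∀ i, G.S i ∈ C → q = G.S i := by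
    intro C
    by_cases hC : C ∈ 𝒞
    · by_cases h : ∃ i, G.S i ∈ C
      · obtain ⟨i, hi⟩ := h
        exact ⟨G.S i, fun _ => ⟨hi, fun j hj => by rw [hs C hC i j hi hj]⟩⟩
      · obtain ⟨q, hq⟩ := hne C hC
        exact ⟨q, fun _ => ⟨hq, fun i hi => absurd ⟨i, hi⟩ h⟩⟩
    · exact ⟨G.S 0, fun h => absurd h hC⟩
  choose rep hrep using hrep
  let φ : G.V → G.V := fun v => if h : ∃ C ∈ 𝒞, v ∈ G.Cl C then rep h.choose else v
  have hφ1 : ∀ C ∈ 𝒞, ∀ X ∈ G.Cl C, φ X = rep C := by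
    intro C hC X hX
    have h : ∃ C ∈ 𝒞, X ∈ G.Cl C := ⟨C, hC, hX⟩
    have e : h.choose = C := hdisj _ h.choose_spec.1 _ hC X h.choose_spec.2 hX
    simp only [φ, dif_pos h, e]
  have hφ2 : ∀ X, (¬ ∃ C ∈ 𝒞, X ∈ G.Cl C) → φ X = X := fun X h => by
    simp only [φ, dif_neg h]
  have hrc : ∀ C ∈ 𝒞, rep C ∈ G.Cl C := fun C hC => sub_Cl (hP C hC) (hrep C hC).1
  have hinj : ∀ X Y, φ X = φ Y → X = Y ∨ ∃ C ∈ 𝒞, X ∈ G.Cl C ∧ Y ∈ G.Cl C := by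
    intro X Y h
    by_cases hX : ∃ C ∈ 𝒞, X ∈ G.Cl C <;> by_cases hY : ∃ C ∈ 𝒞, Y ∈ G.Cl C
    · obtain ⟨C, hC, hX⟩ := hX
      obtain ⟨D, hD, hY⟩ := hY
      rw [hφ1 C hC X hX, hφ1 D hD Y hY] at h
      have := hdisj C hC D hD (rep C) (hrc C hC) (h ▸ hrc D hD)
      subst this
      exact Or.inr ⟨C, hC, hX, hY⟩
    · obtain ⟨C, hC, hX⟩ := hX
      rw [hφ1 C hC X hX, hφ2 Y hY] at h
      exact absurd ⟨C, hC, h ▸ hrc C hC⟩ hY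
    · obtain ⟨C, hC, hY⟩ := hY
      rw [hφ1 C hC Y hY, hφ2 X hX] at h
      exact absurd ⟨C, hC, h ▸ hrc C hC⟩ hX
    · rw [hφ2 X hX, hφ2 Y hY] at h
      exact Or.inl h
  refine ⟨φ, ?_, ?_, ?_, hinj⟩
  · intro i
    by_cases h : ∃ C ∈ 𝒞, G.S i ∈ G.Cl C
    · obtain ⟨C, hC, h⟩ := h
      rw [hφ1 C hC _ h]
      exact (hrep C hC).2 i (src_Cl h)
    · exact hφ2 _ h
  · intro R hR hRs
    by_contra hcon
    push Not at hcon
    obtain ⟨hc1, hc2⟩ := hcon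
    obtain ⟨k, hk⟩ := mem_bigPi.1 hR
    obtain ⟨p, q, hpq, hp, hq⟩ := G.two_parents R hRs
    rcases hinj p q (hc1 p q hp hq) with e | ⟨C, hC, hpC, hqC⟩
    · exact hpq e
    have hall : ∀ X, G.Adj X R → X ∈ G.Cl C := by
      intro X hX
      rcases hinj p X (hc1 p X hp hX) with e | ⟨D, hD, hpD, hXD⟩
      · rwa [← e]
      · rwa [hdisj C hC D hD p hpC hpD]
    have hRC : R ∈ G.Cl C := ⟨k, reg_step ⟨p, hp⟩ (fun X hX => Cl_pl (hall X hX) (pl_parent hk hX))⟩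
    exact hc2 p hp (by rw [hφ1 C hC p hpC, hφ1 C hC R hRC])
  · intro C hC X hX Y hY
    rw [hφ1 C hC X hX, hφ1 C hC Y hY]

/-- noncoplanar set with at least three elements, labelled injectively on planes -/
lemma good_of_inj (φ : G.V → G.V) {L : Set G.V} (hL : L ⊆ G.bigPi)
    (hnc : ∀ k, ¬ L ⊆ G.pl k) (hnt : ∀ X Y, L ≠ {X, Y})
    (j1 : ∀ k, ∀ X ∈ L, ∀ Y ∈ L, X ∈ G.pl k → Y ∈ G.pl k → φ X = φ Y → X = Y)
    (j2 : ∀ k, ∀ Z ∈ L, Z ∈ G.pl k → ∀ i, φ Z = G.S i → i = k ∨ Z = G.S i) :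
    GoodL G φ L := by
  by_cases h : ∃ k, ∃ X ∈ L, ∃ Y ∈ L, X ∈ G.pl k ∧ Y ∈ G.pl k ∧ X ≠ Y
  · obtain ⟨k, X, hX, Y, hY, hXk, hYk, hne⟩ := h
    obtain ⟨Z, hZ, hZk⟩ := Set.not_subset.1 (hnc k)
    obtain ⟨l, hl⟩ := mem_bigPi.1 (hL hZ)
    have hkl : k ≠ l := by rintro rfl; exact hZk hl
    refine Or.inr (Or.inl ⟨k, l, X, Y, Z, hkl, hX, hY, hZ, hXk, hYk, hl,
      fun e => hne (j1 k X hX Y hY hXk hYk e), fun i hi => ?_⟩)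
    rcases j2 l Z hZ hl i hi with e | rfl
    · exact Or.inr e
    · left
      by_contra hik
      exact hZk (src_pl.2 hik)
  · push Not at h
    -- three elements
    have hex : ∀ k, ∃ X ∈ L, X ∈ G.pl k := by
      intro k
      by_contra hcon
      push Not at hcon
      obtain ⟨a, b, ha, hb, hab⟩ : ∃ a b : Fin 3, a ≠ k ∧ b ≠ k ∧ a ≠ b := by
        clear hcon; revert k; decide
      obtain ⟨Y, hY, hYa⟩ := Set.not_subset.1 (hnc a)
      obtain ⟨X, hX, hXb⟩ := Set.not_subset.1 (hnc b)
      have hcase : ∀ Z ∈ L, Z ∈ G.pl a ∨ Z ∈ G.pl b := by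
        intro Z hZ
        obtain ⟨l, hl⟩ := mem_bigPi.1 (hL hZ)
        have h1 : l ≠ k := by rintro rfl; exact hcon Z hZ hl
        have : l = a ∨ l = b := by omega
        rcases this with rfl | rfl
        · exact Or.inl hl
        · exact Or.inr hl
      have hXa := (hcase X hX).resolve_right hXb
      have hYb := (hcase Y hY).resolve_left hYa
      apply hnt X Y
      ext Z
      simp only [Set.mem_insert_iff, Set.mem_singleton_iff]
      constructor
      · intro hZ
        rcases hcase Z hZ with h' | h'
        · exact Or.inl (h a Z hZ X hX h' hXa)
        · exact Or.inr (h b Z hZ Y hY h' hYb)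
      · rintro (rfl | rfl)
        · exact hX
        · exact hY
    choose X hX hXk using hex
    have hall : ∀ Z ∈ L, ∃ k, Z = X k := by
      intro Z hZ
      obtain ⟨l, hl⟩ := mem_bigPi.1 (hL hZ)
      exact ⟨l, h l Z hZ _ (hX l) hl (hXk l)⟩
    have hinj : ∀ a b, a ≠ b → X a ≠ X b := by
      intro a b hab e
      obtain ⟨c, hca, hcb⟩ : ∃ c : Fin 3, c ≠ a ∧ c ≠ b := by
        clear e; revert a b; decide
      apply hnt (X a) (X c)
      ext Z
      simp only [Set.mem_insert_iff, Set.mem_singleton_iff]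
      constructor
      · intro hZ
        obtain ⟨k, rfl⟩ := hall Z hZ
        have : k = a ∨ k = b ∨ k = c := by omega
        rcases this with rfl | rfl | rfl
        · exact Or.inl rfl
        · exact Or.inl e.symm
        · exact Or.inr rfl
      · rintro (rfl | rfl)
        · exact hX _
        · exact hX _
    have hsrc : ∀ k i, φ (X k) = G.S i → i = k := by
      intro k i hi
      rcases j2 k _ (hX k) (hXk k) i hi with e | e
      · exact e
      · exfalso
        have h1 := src_pl.1 (e ▸ hXk k)
        obtain ⟨c, hca, hcb⟩ : ∃ c : Fin 3, c ≠ k ∧ c ≠ i := by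
          clear hi e h1; revert i k; decide
        have h2 : X k ∈ G.pl c := by rw [e]; exact src_pl.2 hcb.symm
        exact hinj k c hca.symm (h c _ (hX k) _ (hX c) h2 (hXk c))
    by_cases hφ : ∃ a b, a ≠ b ∧ φ (X a) = φ (X b)
    · obtain ⟨a, b, hab, e⟩ := hφ
      exact Or.inl ⟨a, b, X a, X b, hab, hX a, hX b, hXk a, hXk b, e,
        fun i hi => Or.inl (hsrc a i hi)⟩
    · push Not at hφ
      refine Or.inr (Or.inr ⟨X, fun k => ⟨hX k, hXk k⟩, fun a b e => ?_, hsrc⟩)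
      by_contra hab
      exact hφ a b hab e

end labels
end RegionGraph

namespace RegionGraph

section comb
variable {n : ℕ} {G : RegionGraph n}

def NC (G : RegionGraph n) (X Y : G.V) : Prop := ∀ k, X ∈ G.pl k → Y ∉ G.pl k

lemma NC.symm {X Y : G.V} (h : G.NC X Y) : G.NC Y X := fun k hY hX => h k hX hY

lemma NC.src {i : Fin 3} {Y : G.V} (h : G.NC (G.S i) Y) {l : Fin 3} (hl : Y ∈ G.pl l) : l = i := by
  by_contra hne
  exact h l (src_pl.2 (Ne.symm hne)) hl

lemma pl_unique {X : G.V} (hX : ∀ i, X ≠ G.S i) {k l : Fin 3} (hk : X ∈ G.pl k)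
    (hl : X ∈ G.pl l) : k = l := by
  by_contra h
  obtain ⟨i, hi⟩ := pl_inter h hk hl
  exact hX i hi

lemma NC.of_nonsrc {X Y : G.V} (hX : ∀ i, X ≠ G.S i) {k : Fin 3} (hk : X ∈ G.pl k)
    (hY : Y ∉ G.pl k) : G.NC X Y := fun l hl => by
  rwa [← pl_unique hX hk hl]

lemma NC.nonsrc {i : Fin 3} {Y : G.V} (hY : Y ∈ G.bigPi) (h : G.NC (G.S i) Y) :
    Y ∈ G.pl i ∧ ∀ j, Y ≠ G.S j := by
  obtain ⟨l, hl⟩ := mem_bigPi.1 hY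
  have := h.src hl
  subst this
  refine ⟨hl, ?_⟩
  rintro j rfl
  have h1 := src_pl.1 hl
  obtain ⟨c, hc1, hc2⟩ : ∃ c : Fin 3, c ≠ l ∧ c ≠ j := by
    clear h hl hY h1; revert l j; decide
  exact hc1 (h.src (src_pl.2 hc2.symm))

lemma NC.ne {X Y : G.V} (hY : Y ∈ G.bigPi) (h : G.NC X Y) : X ≠ Y := by
  rintro rfl
  obtain ⟨l, hl⟩ := mem_bigPi.1 hY
  exact h l hl hl

def EdgeOK (G : RegionGraph n) (D : Set G.V) (X Y : G.V) : Prop :=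
  ∃ k l, k ≠ l ∧ X ∈ G.pl k ∧ Y ∈ G.pl l ∧ ∀ i, G.S i ∈ D → i = k ∨ i = l

def EdgeIn (G : RegionGraph n) (D L : Set G.V) : Prop :=
  ∃ X Y, X ∈ L ∧ Y ∈ L ∧ X ∈ D ∧ Y ∈ D ∧ G.EdgeOK D X Y

lemma edgeOK_self {X Y : G.V} (hX : X ∈ G.bigPi) (hY : Y ∈ G.bigPi) (h : G.NC X Y) :
    G.EdgeOK {X, Y} X Y := by
  obtain ⟨k, hk⟩ := mem_bigPi.1 hX
  obtain ⟨l, hl⟩ := mem_bigPi.1 hY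
  refine ⟨k, l, by rintro rfl; exact h k hk hl, hk, hl, ?_⟩
  rintro i (rfl | e)
  · exact Or.inr (h.src hl).symm
  · have e : G.S i = Y := e
    subst e
    exact Or.inl (h.symm.src hk).symm

lemma good_edge {𝒞 : Set (Set G.V)} {φ : G.V → G.V} (hP : ∀ C ∈ 𝒞, C ⊆ G.bigPi)
    (hdisj : ∀ C ∈ 𝒞, ∀ D ∈ 𝒞, ∀ X, X ∈ G.Cl C → X ∈ G.Cl D → C = D)
    (h1 : ∀ i, φ (G.S i) = G.S i)
    (h3 : ∀ C ∈ 𝒞, ∀ X ∈ G.Cl C, ∀ Y ∈ G.Cl C, φ X = φ Y)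
    (h4 : ∀ X Y, φ X = φ Y → X = Y ∨ ∃ C ∈ 𝒞, X ∈ G.Cl C ∧ Y ∈ G.Cl C)
    {D L : Set G.V} (hD : D ∈ 𝒞) (he : G.EdgeIn D L) : GoodL G φ L := by
  obtain ⟨X, Y, hX, hY, hXD, hYD, k, l, hkl, hXk, hYl, hs⟩ := he
  have hXc := sub_Cl (hP D hD) hXD
  refine Or.inl ⟨k, l, X, Y, hkl, hX, hY, hXk, hYl,
    h3 D hD X hXc Y (sub_Cl (hP D hD) hYD), fun i hi => hs i ?_⟩
  rcases h4 X (G.S i) (by rw [hi, h1]) with e | ⟨C, hC, a, b⟩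
  · rwa [← e]
  · rw [hdisj D hD C hC X hXc a]
    exact src_Cl b

lemma Cl_pair {X Y : G.V} (h : G.NC X Y) : G.Cl {X, Y} ⊆ {X, Y} := by
  rintro R ⟨k, hk⟩
  have hs : (({X, Y} : Set G.V) ∩ G.pl k).Subsingleton := by
    rintro a ⟨ha, hak⟩ b ⟨hb, hbk⟩
    rcases ha with rfl | rfl <;> rcases hb with rfl | rfl
    · rfl
    · exact absurd hbk (h k hak)
    · exact absurd hak (h k hbk)
    · rfl
  exact (reg_subsingleton hs hk).1

lemma pair_src {X Y : G.V} (hX : X ∈ G.bigPi) (hY : Y ∈ G.bigPi) (h : G.NC X Y) :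
    ∀ i j, G.S i ∈ ({X, Y} : Set G.V) → G.S j ∈ ({X, Y} : Set G.V) → i = j := by
  rintro i j (hi | hi) (hj | hj)
  · exact G.S_inj (hi.trans hj.symm)
  · have hj : G.S j = Y := hj
    subst hi
    exact absurd hj.symm ((NC.nonsrc hY h).2 j)
  · have hi : G.S i = Y := hi
    subst hj
    exact absurd hi.symm ((NC.nonsrc hY h).2 i)
  · exact G.S_inj (Eq.trans hi (Eq.symm hj))

/-- one merged class -/
lemma one_class (hA : G.Assumption1) (hTS : G.TerminalSeparable) (D : Set G.V)
    (hP : D ⊆ G.bigPi) (hne : D.Nonempty) (hs : ∀ i j, G.S i ∈ D → G.S j ∈ D → i = j)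
    (h : ∀ φ : G.V → G.V, (∀ i, φ (G.S i) = G.S i) →
      (∀ X Y, φ X = φ Y → X = Y ∨ (X ∈ G.Cl D ∧ Y ∈ G.Cl D)) →
      ∀ j, G.EdgeIn D (G.Lambda {j}) ∨ GoodL G φ (G.Lambda {j})) : G.Feasible := by
  have a1 : ∀ C ∈ ({D} : Set (Set G.V)), C ⊆ G.bigPi := by rintro C rfl; exact hP
  have a4 : ∀ C ∈ ({D} : Set (Set G.V)), ∀ D' ∈ ({D} : Set (Set G.V)), ∀ X, X ∈ G.Cl C →
    X ∈ G.Cl D' → C = D' := by rintro C rfl D' rfl; intros; rfl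
  obtain ⟨φ, h1, h2, h3, h4⟩ := exists_label {D} a1
    (by rintro C rfl; exact hne) (by rintro C rfl; exact hs) a4
  refine realize hA hTS φ h1 h2 (fun j => ?_)
  rcases h φ h1 (fun X Y e => by simpa using h4 X Y e) j with h | h
  · exact good_edge a1 a4 h1 h3 h4 rfl h
  · exact h

lemma one_class_edges (hA : G.Assumption1) (hTS : G.TerminalSeparable) (D : Set G.V)
    (hP : D ⊆ G.bigPi) (hne : D.Nonempty) (hs : ∀ i j, G.S i ∈ D → G.S j ∈ D → i = j)
    (h : ∀ j, G.EdgeIn D (G.Lambda {j})) : G.Feasible :=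
  one_class hA hTS D hP hne hs (fun _ _ _ j => Or.inl (h j))

lemma one_class_J (hA : G.Assumption1) (hTS : G.TerminalSeparable) (D : Set G.V)
    (hP : D ⊆ G.bigPi) (hne : D.Nonempty) (hs : ∀ i j, G.S i ∈ D → G.S j ∈ D → i = j)
    (c : Fin n) (h : ∀ j, j ≠ c → G.EdgeIn D (G.Lambda {j}))
    (hnt : ∀ X Y, G.Lambda {c} ≠ {X, Y})
    (j1 : ∀ k, ∀ X ∈ G.Lambda {c}, ∀ Y ∈ G.Lambda {c}, X ∈ G.pl k → Y ∈ G.pl k →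
      X ∈ G.Cl D → Y ∈ G.Cl D → X = Y)
    (j2 : ∀ k, ∀ Z ∈ G.Lambda {c}, Z ∈ G.pl k → Z ∈ G.Cl D → ∀ i, G.S i ∈ D → i = k ∨ Z = G.S i) :
    G.Feasible := by
  refine one_class hA hTS D hP hne hs (fun φ h1 h4 j => ?_)
  by_cases hj : j = c
  · subst hj
    refine Or.inr (good_of_inj φ (fun _ h => h.1) (lambda_nc hA hTS j) hnt ?_ ?_)
    · intro k X hX Y hY hXk hYk e
      rcases h4 X Y e with e | ⟨a, b⟩
      · exact e
      · exact j1 k X hX Y hY hXk hYk a b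
    · intro k Z hZ hZk i hi
      rcases h4 Z (G.S i) (by rw [hi, h1]) with e | ⟨a, b⟩
      · exact Or.inr e
      · exact j2 k Z hZ hZk a i (src_Cl b)
  · exact Or.inl (h j hj)

lemma lambda_pair_NC (hA : G.Assumption1) (hTS : G.TerminalSeparable) {j : Fin n} {X Y : G.V}
    (h : G.Lambda {j} = {X, Y}) : G.NC X Y := by
  intro k hX hY
  apply lambda_nc hA hTS j k
  rw [h]
  rintro Z (rfl | rfl)
  · exact hX
  · exact hY

lemma two_class (hA : G.Assumption1) (hTS : G.TerminalSeparable) (D : Set G.V)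
    (hP : D ⊆ G.bigPi) (hne : D.Nonempty) (hs : ∀ i j, G.S i ∈ D → G.S j ∈ D → i = j)
    (c : Fin n) (h : ∀ j, j ≠ c → G.EdgeIn D (G.Lambda {j})) (X Y : G.V)
    (ht : G.Lambda {c} = {X, Y}) (hX : X ∉ G.Cl D) (hY : Y ∉ G.Cl D) :
    G.Feasible := by
  have hnc := lambda_pair_NC hA hTS ht
  have hXP : X ∈ G.bigPi := (show X ∈ G.Lambda {c} by rw [ht]; simp).1
  have hYP : Y ∈ G.bigPi := (show Y ∈ G.Lambda {c} by rw [ht]; simp).1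
  have hEP : ({X, Y} : Set G.V) ⊆ G.bigPi := by
    rintro Z (rfl | rfl)
    · exact hXP
    · exact hYP
  have hd : ∀ Z, Z ∈ G.Cl D → Z ∉ G.Cl {X, Y} := by
    intro Z h1 h2
    rcases Cl_pair hnc h2 with rfl | h3
    · exact hX h1
    · have h3 : Z = Y := h3
      subst h3
      exact hY h1
  have a1 : ∀ C ∈ ({D, {X, Y}} : Set (Set G.V)), C ⊆ G.bigPi := by
    rintro C (rfl | rfl)
    · exact hP
    · exact hEP
  have a4 : ∀ C ∈ ({D, {X, Y}} : Set (Set G.V)), ∀ D' ∈ ({D, {X, Y}} : Set (Set G.V)), ∀ Z,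
      Z ∈ G.Cl C → Z ∈ G.Cl D' → C = D' := by
    rintro C (rfl | rfl) D' (rfl | rfl) Z h1 h2
    · rfl
    · exact absurd h2 (hd Z h1)
    · exact absurd h1 (hd Z h2)
    · rfl
  obtain ⟨φ, h1, h2, h3, h4⟩ := exists_label {D, {X, Y}} a1
    (by rintro C (rfl | rfl); exacts [hne, ⟨X, by simp⟩])
    (by rintro C (rfl | rfl); exacts [hs, pair_src hXP hYP hnc]) a4
  refine realize hA hTS φ h1 h2 (fun j => ?_)
  by_cases hj : j = c
  · subst hj
    refine good_edge a1 a4 h1 h3 h4 (D := {X, Y}) (by simp) ?_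
    exact ⟨X, Y, by rw [ht]; simp, by rw [ht]; simp, by simp, by simp, edgeOK_self hXP hYP hnc⟩
  · exact good_edge a1 a4 h1 h3 h4 (D := D) (by simp) (h j hj)

/-- no two distinct tight terminals share a vertex -/
lemma type_one (hA : G.Assumption1) (hTS : G.TerminalSeparable)
    (hsh : ∀ a b Q P R, G.Lambda {a} = {Q, P} → G.Lambda {b} = {Q, R} → P = R) :
    G.Feasible := by
  let 𝒞 : Set (Set G.V) := {C | ∃ j X Y, C = G.Lambda {j} ∧ G.Lambda {j} = {X, Y}}
  have hnc : ∀ j X Y, G.Lambda {j} = {X, Y} → G.NC X Y := fun j X Y h => lambda_pair_NC hA hTS h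
  have hmem : ∀ j, ∀ Z ∈ G.Lambda {j}, ∀ X Y, G.Lambda {j} = {X, Y} →
      ∃ W, G.Lambda {j} = {Z, W} := by
    intro j Z hZ X Y h
    rw [h] at hZ
    rcases hZ with rfl | hZ
    · exact ⟨Y, h⟩
    · have hZ : Z = Y := hZ
      subst hZ
      exact ⟨X, by rw [h, Set.pair_comm]⟩
  have hcl : ∀ j X Y, G.Lambda {j} = {X, Y} → G.Cl (G.Lambda {j}) ⊆ G.Lambda {j} := by
    intro j X Y h
    rw [h]; exact Cl_pair (hnc j X Y h)
  have a1 : ∀ C ∈ 𝒞, C ⊆ G.bigPi := by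
    rintro C ⟨j, X, Y, rfl, h⟩ Z hZ
    exact hZ.1
  have a4 : ∀ C ∈ 𝒞, ∀ D ∈ 𝒞, ∀ Z, Z ∈ G.Cl C → Z ∈ G.Cl D → C = D := by
    rintro C ⟨a, X, Y, rfl, h⟩ D ⟨b, X', Y', rfl, h'⟩ Z hZ hZ'
    obtain ⟨W, hW⟩ := hmem a Z (hcl _ _ _ h hZ) X Y h
    obtain ⟨W', hW'⟩ := hmem b Z (hcl _ _ _ h' hZ') X' Y' h'
    rw [hW, hW', hsh a b Z W W' hW hW']
  obtain ⟨φ, h1, h2, h3, h4⟩ := exists_label 𝒞 a1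
    (by rintro C ⟨j, X, Y, rfl, h⟩; rw [h]; exact ⟨X, by simp⟩)
    (by rintro C ⟨j, X, Y, rfl, h⟩
        have e := h
        have hX : X ∈ G.Lambda {j} := by rw [h]; simp
        have hY : Y ∈ G.Lambda {j} := by rw [h]; simp
        rw [e]
        exact pair_src hX.1 hY.1 (hnc j X Y h)) a4
  refine realize hA hTS φ h1 h2 (fun j => ?_)
  by_cases ht : ∃ X Y, G.Lambda {j} = {X, Y}
  · obtain ⟨X, Y, h⟩ := ht
    have hX : X ∈ G.Lambda {j} := by rw [h]; simp
    have hY : Y ∈ G.Lambda {j} := by rw [h]; simp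
    refine good_edge a1 a4 h1 h3 h4 (D := G.Lambda {j}) ⟨j, X, Y, rfl, h⟩ ?_
    refine ⟨X, Y, hX, hY, hX, hY, ?_⟩
    rw [h]
    exact edgeOK_self hX.1 hY.1 (hnc j X Y h)
  · push Not at ht
    refine good_of_inj φ (fun _ h => h.1) (lambda_nc hA hTS j) ht ?_ ?_
    · intro k X hX Y hY hXk hYk e
      rcases h4 X Y e with e | ⟨C, ⟨b, X', Y', rfl, h⟩, a, b'⟩
      · exact e
      · obtain ⟨W, hW⟩ := hmem b X (hcl _ _ _ h a) X' Y' h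
        have hYm := hcl _ _ _ h b'
        rw [hW] at hYm
        rcases hYm with e | e
        · exact e.symm
        · have e : Y = W := e
          subst e
          exact absurd hYk (hnc b X Y hW k hXk)
    · intro k Z hZ hZk i hi
      rcases h4 Z (G.S i) (by rw [hi, h1]) with e | ⟨C, ⟨b, X', Y', rfl, h⟩, a, b'⟩
      · exact Or.inr e
      · obtain ⟨W, hW⟩ := hmem b Z (hcl _ _ _ h a) X' Y' h
        have hYm := hcl _ _ _ h b'
        rw [hW] at hYm
        rcases hYm with e | e
        · exact Or.inr e.symm
        · have e : G.S i = W := e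
          subst e
          exact Or.inl ((hnc b Z _ hW).symm.src hZk).symm

end comb
end RegionGraph

namespace RegionGraph

section final
variable {G : RegionGraph 3}

lemma exists_perm3 : ∀ i m k : Fin 3, i ≠ m → i ≠ k → m ≠ k →
    ∃ σ : Equiv.Perm (Fin 3), σ 0 = i ∧ σ 1 = m ∧ σ 2 = k := by decide

lemma third : ∀ i k : Fin 3, i ≠ k → ∃ m, i ≠ m ∧ k ≠ m ∧ ∀ j, j = i ∨ j = k ∨ j = m := by decide

lemma cir_mk {i k m a b c : Fin 3} (hik : i ≠ k) (him : i ≠ m) (hkm : k ≠ m)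
    (hab : a ≠ b) (hac : a ≠ c) (hbc : b ≠ c) {P₁ P₂ : G.V}
    (h1 : G.Lambda {a} = {G.S i, P₁}) (h2 : G.Lambda {b} = {P₁, P₂})
    (hP1 : P₁ ∈ G.pl i) (hn1 : ∀ j, P₁ ≠ G.S j) (hP2 : P₂ ∈ G.pl k) (hn2 : ∀ j, P₂ ≠ G.S j)
    (h3 : G.Lambda {c} ⊆ G.reg {G.S i, P₂} ∪ G.pl m) : G.CIR := by
  obtain ⟨σ, rfl, rfl, rfl⟩ := exists_perm3 i m k him hik hkm.symm
  obtain ⟨τ, rfl, rfl, rfl⟩ := exists_perm3 a b c hab hac hbc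
  refine ⟨σ, τ, P₁, P₂, ⟨?_, ?_⟩, ⟨?_, ?_⟩, h1, h2, ?_⟩
  · rwa [pl_eq hkm.symm him.symm hik.symm]
  · rintro (h | h)
    exacts [hn1 _ h, hn1 _ h]
  · rwa [pl_eq him hik hkm.symm]
  · rintro (h | h)
    exacts [hn2 _ h, hn2 _ h]
  · rwa [pl_eq hik him hkm]

lemma fstmem {a : Fin 3} {X Y : G.V} (h : G.Lambda {a} = {X, Y}) : X ∈ G.Lambda {a} := by
  rw [h]; exact Or.inl rfl

lemma sndmem {a : Fin 3} {X Y : G.V} (h : G.Lambda {a} = {X, Y}) : Y ∈ G.Lambda {a} := by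
  rw [h]; exact Or.inr rfl

lemma case_A (hA : G.Assumption1) (hTS : G.TerminalSeparable) {a b : Fin 3} {i : Fin 3}
    {P₁ P₂ : G.V} (h1 : G.Lambda {a} = {G.S i, P₁}) (h2 : G.Lambda {b} = {P₁, P₂})
    (hne : P₂ ≠ G.S i) (hnf : ¬ G.Feasible) : G.CIR := by
  have n1 := lambda_pair_NC hA hTS h1
  have n2 := lambda_pair_NC hA hTS h2
  have p1P : P₁ ∈ G.bigPi := (sndmem h1).1
  have p2P : P₂ ∈ G.bigPi := (sndmem h2).1
  obtain ⟨hP1, hn1⟩ := NC.nonsrc p1P n1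
  have hn2 : ∀ j, P₂ ≠ G.S j := by
    rintro j rfl
    have := n2.symm.src hP1
    subst this
    exact hne rfl
  obtain ⟨k, hP2⟩ := mem_bigPi.1 p2P
  have hik : i ≠ k := by rintro rfl; exact n2 i hP1 hP2
  have hab : a ≠ b := by
    rintro rfl
    have := fstmem h1
    rw [h2] at this
    rcases this with h | h
    · exact hn1 _ h.symm
    · exact hne (Eq.symm h)
  obtain ⟨m, him, hkm, hall⟩ := third i k hik
  obtain ⟨c, hac, hbc, hallT⟩ := third a b hab
  by_cases hU : G.Lambda {c} ⊆ G.reg {G.S i, P₂} ∪ G.pl m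
  · exact cir_mk hik him hkm hab hac hbc h1 h2 hP1 hn1 hP2 hn2 hU
  exfalso
  apply hnf
  obtain ⟨V, hVc, hVU⟩ := Set.not_subset.1 hU
  have hVr : V ∉ G.reg {G.S i, P₂} := fun h => hVU (Or.inl h)
  have hVm : V ∉ G.pl m := fun h => hVU (Or.inr h)
  have hregk : G.reg {G.S i, P₂} ⊆ G.pl k := by
    apply reg_pl
    rintro Z (rfl | rfl)
    · exact src_pl.2 hik
    · exact hP2
  set C : Set G.V := {G.S i, P₁, P₂} with hC
  have hCP : C ⊆ G.bigPi := by
    rintro Z (rfl | rfl | rfl)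
    exacts [src_bigPi i, p1P, p2P]
  have hCne : C.Nonempty := ⟨_, Or.inl rfl⟩
  have hCs : ∀ j, G.S j ∈ C → j = i := by
    rintro j (h | h | h)
    · exact G.S_inj h
    · exact absurd h.symm (hn1 j)
    · exact absurd (Eq.symm h) (hn2 j)
  have hCs2 : ∀ j l, G.S j ∈ C → G.S l ∈ C → j = l := fun j l hj hl =>
    (hCs j hj).trans (hCs l hl).symm
  have hCl : ∀ X ∈ G.Cl C, X = P₁ ∨ X ∈ G.reg {G.S i, P₂} := by
    rintro X ⟨l, hl⟩
    by_cases hli : l = i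
    · subst hli
      left
      have : C ∩ G.pl l ⊆ {P₁} := by
        rintro Z ⟨rfl | rfl | rfl, hZ⟩
        · exact absurd rfl (src_pl.1 hZ)
        · rfl
        · exact absurd hZ (n2 l hP1)
      exact reg_singleton (reg_mono this hl)
    · right
      refine reg_mono ?_ hl
      rintro Z ⟨rfl | rfl | rfl, hZ⟩
      · exact Or.inl rfl
      · exact absurd (pl_unique hn1 hZ hP1) hli
      · exact Or.inr rfl
  have hCl2 : G.reg {G.S i, P₂} ⊆ G.Cl C := by
    intro X hX
    refine ⟨k, reg_mono ?_ hX⟩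
    rintro Z (rfl | rfl)
    · exact ⟨Or.inl rfl, src_pl.2 hik⟩
    · exact ⟨Or.inr (Or.inr rfl), hP2⟩
  have hP1Cl : P₁ ∈ G.Cl C := sub_Cl hCP (Or.inr (Or.inl rfl))
  by_cases hb : ∃ X ∈ G.Lambda {c}, ∃ Y ∈ G.Lambda {c}, G.NC X Y ∧ X ∈ G.Cl C ∧
      ¬ (X ∈ G.reg {G.S i, P₂} ∪ G.pl m ∧ Y ∈ G.reg {G.S i, P₂} ∪ G.pl m)
  · obtain ⟨X, hX, Y, hY, hXY, hXC, hn⟩ := hb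
    -- planes of X, Y
    have hpl : ∃ u v, u ≠ v ∧ X ∈ G.pl u ∧ Y ∈ G.pl v ∧ (i = u ∨ i = v) := by
      rcases hCl X hXC with rfl | hXr
      · obtain ⟨l, hl⟩ := mem_bigPi.1 hY.1
        exact ⟨i, l, by rintro rfl; exact hXY _ hP1 hl, hP1, hl, Or.inl rfl⟩
      · obtain ⟨l, hl⟩ := mem_bigPi.1 hY.1
        rcases hall l with rfl | rfl | rfl
        · exact ⟨k, l, hik.symm, hregk hXr, hl, Or.inr rfl⟩
        · exact absurd hl (hXY _ (hregk hXr))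
        · exact absurd ⟨Or.inl hXr, Or.inr hl⟩ hn
    have hXs : ∀ j, G.S j = X → j = i := fun j h => hCs j (src_Cl (h ▸ hXC))
    have hYs : ∀ j, G.S j = Y → j = i := by
      rintro j rfl
      rcases hCl X hXC with rfl | hXr
      · exact (hXY.symm.src hP1).symm
      · have e := hXY.symm.src (hregk hXr)
        subst e
        by_contra
        by_cases hm : X ∈ G.pl m
        · exact absurd (hXY.symm.src hm) (Ne.symm hkm)
        · exact hn ⟨Or.inl hXr, Or.inr (src_pl.2 hkm)⟩
    set D : Set G.V := {G.S i, P₁, P₂, X, Y} with hD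
    have hDs : ∀ j, G.S j ∈ D → j = i := by
      rintro j (h | h | h | h | h)
      · exact hCs j (Or.inl h)
      · exact hCs j (Or.inr (Or.inl h))
      · exact hCs j (Or.inr (Or.inr h))
      · exact hXs j h
      · exact hYs j h
    refine one_class_edges hA hTS D ?_ ⟨_, Or.inl rfl⟩ (fun j l hj hl =>
      (hDs j hj).trans (hDs l hl).symm) ?_
    · rintro Z (rfl | rfl | rfl | rfl | rfl)
      exacts [src_bigPi i, p1P, p2P, hX.1, hY.1]
    · intro j
      rcases hallT j with rfl | rfl | rfl
      · exact ⟨G.S i, P₁, fstmem h1, sndmem h1, by simp [hD], by simp [hD], k, i, hik.symm,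
          src_pl.2 hik, hP1, fun l hl => Or.inr (hDs l hl)⟩
      · exact ⟨P₁, P₂, fstmem h2, sndmem h2, by simp [hD], by simp [hD], i, k, hik,
          hP1, hP2, fun l hl => Or.inl (hDs l hl)⟩
      · obtain ⟨u, v, huv, hXu, hYv, hi⟩ := hpl
        exact ⟨X, Y, hX, hY, by simp [hD], by simp [hD], u, v, huv, hXu, hYv,
          fun l hl => by rw [hDs l hl]; exact hi⟩
  · have hb' : ∀ X ∈ G.Lambda {c}, ∀ Y ∈ G.Lambda {c}, G.NC X Y → X ∈ G.Cl C →
      (X ∈ G.reg {G.S i, P₂} ∪ G.pl m ∧ Y ∈ G.reg {G.S i, P₂} ∪ G.pl m) := by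
      intro X hX Y hY hXY hXC
      by_contra hn
      exact hb ⟨X, hX, Y, hY, hXY, hXC, hn⟩
    have hedge : ∀ j, j ≠ c → G.EdgeIn C (G.Lambda {j}) := by
      intro j hj
      rcases hallT j with rfl | rfl | rfl
      · exact ⟨G.S i, P₁, fstmem h1, sndmem h1, by simp [hC], by simp [hC], k, i, hik.symm,
          src_pl.2 hik, hP1, fun l hl => Or.inr (hCs l hl)⟩
      · exact ⟨P₁, P₂, fstmem h2, sndmem h2, by simp [hC], by simp [hC], i, k, hik,
          hP1, hP2, fun l hl => Or.inl (hCs l hl)⟩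
      · exact absurd rfl hj
    by_cases ht : ∃ X Y, G.Lambda {c} = {X, Y}
    · obtain ⟨X, Y, ht⟩ := ht
      have nXY := lambda_pair_NC hA hTS ht
      refine two_class hA hTS C hCP hCne hCs2 c hedge X Y ht ?_ ?_
      · intro hX
        obtain ⟨u1, u2⟩ := hb' X (fstmem ht) Y (sndmem ht) nXY hX
        rw [ht] at hVc
        rcases hVc with rfl | rfl
        exacts [hVU u1, hVU u2]
      · intro hX
        obtain ⟨u1, u2⟩ := hb' Y (sndmem ht) X (fstmem ht) nXY.symm hX
        rw [ht] at hVc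
        rcases hVc with rfl | rfl
        exacts [hVU u2, hVU u1]
    · have hP1c : P₁ ∉ G.Lambda {c} := by
        intro h
        obtain ⟨Y, hY, hYi⟩ := Set.not_subset.1 (lambda_nc hA hTS c i)
        rcases (hb' P₁ h Y hY (NC.of_nonsrc hn1 hP1 hYi) hP1Cl).1 with h | h
        · exact hik (pl_unique hn1 hP1 (hregk h))
        · exact him (pl_unique hn1 hP1 h)
      by_cases hx : ∃ X ∈ G.Lambda {c}, X ∈ G.reg {G.S i, P₂} ∧ X ≠ G.S i
      · obtain ⟨X, hX, hXr, hXi⟩ := hx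
        have hXn : ∀ j, X ≠ G.S j := by
          rintro j rfl
          have := hCs j (src_Cl (hCl2 hXr))
          subst this
          exact hXi rfl
        have hVk : V ∈ G.pl k := by
          by_contra h
          exact hVU (hb' X hX V hVc (NC.of_nonsrc hXn (hregk hXr) h) (hCl2 hXr)).2
        obtain ⟨W, hW, hWk⟩ := Set.not_subset.1 (lambda_nc hA hTS c k)
        have hWm : W ∈ G.pl m := by
          rcases (hb' X hX W hW (NC.of_nonsrc hXn (hregk hXr) hWk) (hCl2 hXr)).2 with h | h
          · exact absurd (hregk h) hWk
          · exact h
        refine one_class hA hTS C hCP hCne hCs2 (fun φ f1 f2 j => ?_)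
        by_cases hj : j = c
        · subst hj
          right; right; left
          refine ⟨k, m, X, V, W, hkm, hX, hVc, hW, hregk hXr, hVk, hWm, ?_, ?_⟩
          · intro e
            rcases f2 _ _ e with rfl | ⟨_, h⟩
            · exact hVr hXr
            · rcases hCl V h with rfl | h
              · exact hP1c hVc
              · exact hVr h
          · intro l hl
            rw [← f1 l] at hl
            rcases f2 _ _ hl with rfl | ⟨h, _⟩
            · left
              by_contra hlk
              exact hWk (src_pl.2 hlk)
            · rcases hCl W h with rfl | h
              · exact absurd hW hP1c
              · exact absurd (hregk h) hWk
        · exact Or.inl (hedge j hj)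
      · have hx' : ∀ X ∈ G.Lambda {c}, X ∈ G.Cl C → X = G.S i := by
          intro X hX hXC
          rcases hCl X hXC with rfl | h
          · exact absurd hX hP1c
          · by_contra hne
            exact hx ⟨X, hX, h, hne⟩
        refine one_class_J hA hTS C hCP hCne hCs2 c hedge (fun X Y h => ht ⟨X, Y, h⟩) ?_ ?_
        · intro l X hX Y hY _ _ hXC hYC
          rw [hx' X hX hXC, hx' Y hY hYC]
        · intro l Z hZ _ hZC j hj
          right
          rw [hCs j hj]
          exact hx' Z hZ hZC

lemma case_B (hA : G.Assumption1) (hTS : G.TerminalSeparable)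
    (hnc : ∀ a b i P₁ P₂, G.Lambda {a} = {G.S i, P₁} → G.Lambda {b} = {P₁, P₂} → P₂ = G.S i)
    {a b : Fin 3} {Q P R : G.V} (h1 : G.Lambda {a} = {Q, P}) (h2 : G.Lambda {b} = {Q, R})
    (hPR : P ≠ R) : G.Feasible := by
  have n1 := lambda_pair_NC hA hTS h1
  have n2 := lambda_pair_NC hA hTS h2
  have qP : Q ∈ G.bigPi := (fstmem h1).1
  have pP : P ∈ G.bigPi := (sndmem h1).1
  have rP : R ∈ G.bigPi := (sndmem h2).1
  have hPn : ∀ j, P ≠ G.S j := by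
    rintro j rfl
    rw [Set.pair_comm] at h1
    exact hPR (hnc a b j Q R h1 h2).symm
  have hRn : ∀ j, R ≠ G.S j := by
    rintro j rfl
    rw [Set.pair_comm] at h2
    exact hPR (hnc b a j Q P h2 h1)
  have hab : a ≠ b := by
    rintro rfl
    have := sndmem h2
    rw [h1] at this
    rcases this with h | h
    · exact n2.ne rP h.symm
    · exact hPR (Eq.symm h)
  obtain ⟨c, hac, hbc, hallT⟩ := third a b hab
  set C : Set G.V := {Q, P, R} with hC
  have hCP : C ⊆ G.bigPi := by
    rintro Z (rfl | rfl | rfl)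
    exacts [qP, pP, rP]
  have hCne : C.Nonempty := ⟨_, Or.inl rfl⟩
  have hCsQ : ∀ j, G.S j ∈ C → G.S j = Q := by
    rintro j (h | h | h)
    · exact h
    · exact absurd h.symm (hPn j)
    · exact absurd (Eq.symm h) (hRn j)
  have hCs2 : ∀ j l, G.S j ∈ C → G.S l ∈ C → j = l := fun j l hj hl =>
    G.S_inj ((hCsQ j hj).trans (hCsQ l hl).symm)
  -- from plane data for the two edges
  have hedgeD : ∀ D : Set G.V, C ⊆ D → G.EdgeOK D Q P → G.EdgeOK D Q R →
      ∀ j, j ≠ c → G.EdgeIn D (G.Lambda {j}) := by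
    intro D hD e1 e2 j hj
    rcases hallT j with rfl | rfl | rfl
    · exact ⟨Q, P, fstmem h1, sndmem h1, hD (by simp [hC]), hD (by simp [hC]), e1⟩
    · exact ⟨Q, R, fstmem h2, sndmem h2, hD (by simp [hC]), hD (by simp [hC]), e2⟩
    · exact absurd rfl hj
  have fin5 : ∀ X ∈ G.Lambda {c}, ∀ Y ∈ G.Lambda {c},
      (∀ i j, G.S i ∈ C ∪ {X, Y} → G.S j ∈ C ∪ {X, Y} → i = j) →
      G.EdgeOK (C ∪ {X, Y}) Q P → G.EdgeOK (C ∪ {X, Y}) Q R → G.EdgeOK (C ∪ {X, Y}) X Y →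
      G.Feasible := by
    intro X hX Y hY hs e1 e2 e3
    refine one_class_edges hA hTS (C ∪ {X, Y}) ?_ ⟨Q, Or.inl (Or.inl rfl)⟩ hs ?_
    · rintro Z (h | rfl | rfl)
      exacts [hCP h, hX.1, hY.1]
    · intro j
      by_cases hj : j = c
      · subst hj
        exact ⟨X, Y, hX, hY, by simp, by simp, e3⟩
      · exact hedgeD _ Set.subset_union_left e1 e2 j hj
  obtain ⟨p, hp⟩ := mem_bigPi.1 pP
  obtain ⟨r, hr⟩ := mem_bigPi.1 rP
  by_cases hQ : ∃ i, Q = G.S i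
  · obtain ⟨i, rfl⟩ := hQ
    have := n1.src hp
    subst this
    have := n2.src hr
    subst this
    obtain ⟨k, hkr⟩ : ∃ k, k ≠ r := exists_ne r
    have hCl : ∀ X ∈ G.Cl C, X = G.S r ∨ (X ∈ G.pl r ∧ ∀ j, X ≠ G.S j) := by
      intro X hX
      by_cases hs : ∃ j, X = G.S j
      · obtain ⟨j, rfl⟩ := hs
        exact Or.inl (hCsQ j (src_Cl hX))
      · push Not at hs
        right
        refine ⟨?_, hs⟩
        obtain ⟨l, hl⟩ := hX
        by_cases hlr : l = r
        · subst hlr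
          exact reg_pl Set.inter_subset_right hl
        · have : C ∩ G.pl l ⊆ {G.S r} := by
            rintro Z ⟨rfl | rfl | rfl, hZ⟩
            · rfl
            · exact absurd (pl_unique hPn hZ hp) hlr
            · exact absurd (pl_unique hRn hZ hr) hlr
          exact absurd (reg_singleton (reg_mono this hl)) (hs r)
    have eP : ∀ D : Set G.V, (∀ j, G.S j ∈ D → j = r) → G.EdgeOK D (G.S r) P :=
      fun D hD => ⟨k, r, hkr, src_pl.2 hkr.symm, hp, fun j hj => Or.inr (hD j hj)⟩
    have eR : ∀ D : Set G.V, (∀ j, G.S j ∈ D → j = r) → G.EdgeOK D (G.S r) R :=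
      fun D hD => ⟨k, r, hkr, src_pl.2 hkr.symm, hr, fun j hj => Or.inr (hD j hj)⟩
    have hCs : ∀ j, G.S j ∈ C → j = r := fun j hj => G.S_inj (hCsQ j hj)
    by_cases hb : ∃ X ∈ G.Lambda {c}, ∃ Y ∈ G.Lambda {c}, G.NC X Y ∧ X ∈ G.Cl C
    · obtain ⟨X, hX, Y, hY, hXY, hXC⟩ := hb
      have hDs : ∀ j, G.S j ∈ C ∪ {X, Y} → j = r := by
        rintro j (h | h | h)
        · exact hCs j h
        · exact hCs j (src_Cl (h ▸ hXC))
        · have h : G.S j = Y := h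
          subst h
          rcases hCl X hXC with rfl | ⟨h, _⟩
          · exact absurd rfl ((NC.nonsrc hY.1 hXY).2 j)
          · exact (hXY.symm.src h).symm
      refine fin5 X hX Y hY (fun j l hj hl => (hDs j hj).trans (hDs l hl).symm) (eP _ hDs)
        (eR _ hDs) ?_
      rcases hCl X hXC with e | ⟨h, _⟩
      · rw [e] at hXY
        exact ⟨k, r, hkr, by rw [e]; exact src_pl.2 hkr.symm, (NC.nonsrc hY.1 hXY).1,
          fun j hj => Or.inr (hDs j hj)⟩
      · obtain ⟨l, hl⟩ := mem_bigPi.1 hY.1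
        exact ⟨r, l, by rintro rfl; exact hXY _ h hl, h, hl, fun j hj => Or.inl (hDs j hj)⟩
    · have hb' : ∀ X ∈ G.Lambda {c}, ∀ Y ∈ G.Lambda {c}, G.NC X Y → X ∉ G.Cl C :=
        fun X hX Y hY hXY hXC => hb ⟨X, hX, Y, hY, hXY, hXC⟩
      by_cases ht : ∃ X Y, G.Lambda {c} = {X, Y}
      · obtain ⟨X, Y, ht⟩ := ht
        have nXY := lambda_pair_NC hA hTS ht
        exact two_class hA hTS C hCP hCne hCs2 c
          (hedgeD C subset_rfl (eP _ hCs) (eR _ hCs)) X Y ht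
          (hb' X (fstmem ht) Y (sndmem ht) nXY) (hb' Y (sndmem ht) X (fstmem ht) nXY.symm)
      · have hx' : ∀ X ∈ G.Lambda {c}, X ∈ G.Cl C → X = G.S r := by
          intro X hX hXC
          rcases hCl X hXC with h | ⟨h, hn⟩
          · exact h
          · obtain ⟨W, hW, hWk⟩ := Set.not_subset.1 (lambda_nc hA hTS c r)
            exact absurd hXC (hb' X hX W hW (NC.of_nonsrc hn h hWk))
        refine one_class_J hA hTS C hCP hCne hCs2 c (hedgeD C subset_rfl (eP _ hCs) (eR _ hCs))
          (fun X Y h => ht ⟨X, Y, h⟩) ?_ ?_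
        · intro l X hX Y hY _ _ hXC hYC
          rw [hx' X hX hXC, hx' Y hY hYC]
        · intro l Z hZ _ hZC j hj
          right
          rw [hCs j hj]
          exact hx' Z hZ hZC
  · push Not at hQ
    obtain ⟨q, hq⟩ := mem_bigPi.1 qP
    have hqp : q ≠ p := by rintro rfl; exact n1 _ hq hp
    have hqr : q ≠ r := by rintro rfl; exact n2 _ hq hr
    have hCs : ∀ j, G.S j ∉ C := fun j hj => hQ j (hCsQ j hj).symm
    have eC1 : G.EdgeOK C Q P := ⟨q, p, hqp, hq, hp, fun j hj => absurd hj (hCs j)⟩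
    have eC2 : G.EdgeOK C Q R := ⟨q, r, hqr, hq, hr, fun j hj => absurd hj (hCs j)⟩
    have hClns : ∀ X ∈ G.Cl C, ∀ j, X ≠ G.S j := by
      rintro X hX j rfl
      exact hCs j (src_Cl hX)
    by_cases hpr : p = r
    · subst hpr
      have hCl : ∀ X ∈ G.Cl C, X ∈ G.pl q ∨ X ∈ G.pl p := by
        rintro X ⟨l, hl⟩
        have hXl : X ∈ G.pl l := reg_pl Set.inter_subset_right hl
        have : (C ∩ G.pl l).Nonempty := by
          by_contra h
          rw [Set.not_nonempty_iff_eq_empty] at h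
          rw [h, reg_empty] at hl
          exact hl
        obtain ⟨Z, rfl | rfl | rfl, hZ⟩ := this
        · left; rwa [pl_unique hQ hq hZ]
        · right; rwa [pl_unique hPn hp hZ]
        · right; rwa [pl_unique hRn hr hZ]
      by_cases hb : ∃ X ∈ G.Lambda {c}, ∃ Y ∈ G.Lambda {c}, G.NC X Y ∧ X ∈ G.Cl C
      · obtain ⟨X, hX, Y, hY, hXY, hXC⟩ := hb
        have hDY : ∀ j, G.S j ∈ C ∪ {X, Y} → G.S j = Y := by
          rintro j (h | h | h)
          · exact absurd h (hCs j)
          · exact absurd h.symm (hClns X hXC j)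
          · exact h
        have hXpl : ∀ j, G.S j ∈ C ∪ {X, Y} → ∀ l, X ∈ G.pl l → j = l := by
          intro j hj l hl
          have e := hDY j hj
          rw [← e] at hXY
          exact (hXY.symm.src hl).symm
        have hDqp : ∀ j, G.S j ∈ C ∪ {X, Y} → j = q ∨ j = p := by
          intro j hj
          rcases hCl X hXC with h | h
          · exact Or.inl (hXpl j hj _ h)
          · exact Or.inr (hXpl j hj _ h)
        obtain ⟨u, hu⟩ := mem_bigPi.1 hX.1
        obtain ⟨v, hv⟩ := mem_bigPi.1 hY.1
        exact fin5 X hX Y hY (fun j l hj hl => G.S_inj ((hDY j hj).trans (hDY l hl).symm))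
          ⟨q, p, hqp, hq, hp, hDqp⟩ ⟨q, p, hqp, hq, hr, hDqp⟩
          ⟨u, v, by rintro rfl; exact hXY _ hu hv, hu, hv, fun j hj => Or.inl (hXpl j hj u hu)⟩
      · have hb' : ∀ X ∈ G.Lambda {c}, X ∉ G.Cl C := by
          intro X hX hXC
          obtain ⟨u, hu⟩ := mem_bigPi.1 hX.1
          obtain ⟨W, hW, hWk⟩ := Set.not_subset.1 (lambda_nc hA hTS c u)
          exact hb ⟨X, hX, W, hW, NC.of_nonsrc (hClns X hXC) hu hWk, hXC⟩
        by_cases ht : ∃ X Y, G.Lambda {c} = {X, Y}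
        · obtain ⟨X, Y, ht⟩ := ht
          exact two_class hA hTS C hCP hCne hCs2 c (hedgeD C subset_rfl eC1 eC2) X Y ht
            (hb' X (fstmem ht)) (hb' Y (sndmem ht))
        · exact one_class_J hA hTS C hCP hCne hCs2 c (hedgeD C subset_rfl eC1 eC2)
            (fun X Y h => ht ⟨X, Y, h⟩)
            (fun l X hX Y hY _ _ hXC _ => absurd hXC (hb' X hX))
            (fun l Z hZ _ hZC => absurd hZC (hb' Z hZ))
    · have hss : ∀ l, (C ∩ G.pl l).Subsingleton := by
        intro l
        have e1 : Q ∈ G.pl l → l = q := fun h => pl_unique hQ h hq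
        have e2 : P ∈ G.pl l → l = p := fun h => pl_unique hPn h hp
        have e3 : R ∈ G.pl l → l = r := fun h => pl_unique hRn h hr
        rintro A ⟨rfl | rfl | rfl, ha⟩ B ⟨rfl | rfl | rfl, hb⟩ <;> grind
      have hClC : G.Cl C ⊆ C := fun X ⟨l, hl⟩ => (reg_subsingleton (hss l) hl).1
      by_cases ht : ∃ X Y, G.Lambda {c} = {X, Y}
      · -- the neighbour of a point of C is not a source
        have hnb : ∀ X Y, G.Lambda {c} = {X, Y} → X ∈ C → G.Feasible := by
          intro X Y ht hX
          have nXY := lambda_pair_NC hA hTS ht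
          have hYn : ∀ j, Y ≠ G.S j := by
            rintro j rfl
            rw [Set.pair_comm] at ht
            rcases hX with rfl | rfl | rfl
            · exact hPn _ (hnc c a j _ _ ht h1)
            · rw [Set.pair_comm] at h1
              exact hQ _ (hnc c a j _ _ ht h1)
            · rw [Set.pair_comm] at h2
              exact hQ _ (hnc c b j _ _ ht h2)
          have hDs : ∀ j, G.S j ∉ C ∪ {X, Y} := by
            rintro j (h | h | h)
            · exact hCs j h
            · exact hCs j (h ▸ hX)
            · exact hYn j (Eq.symm h)
          obtain ⟨u, hu⟩ := mem_bigPi.1 (fstmem ht).1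
          obtain ⟨v, hv⟩ := mem_bigPi.1 (sndmem ht).1
          exact fin5 X (fstmem ht) Y (sndmem ht) (fun j l hj => absurd hj (hDs j))
            ⟨q, p, hqp, hq, hp, fun j hj => absurd hj (hDs j)⟩
            ⟨q, r, hqr, hq, hr, fun j hj => absurd hj (hDs j)⟩
            ⟨u, v, by rintro rfl; exact nXY _ hu hv, hu, hv, fun j hj => absurd hj (hDs j)⟩
        obtain ⟨X, Y, ht⟩ := ht
        by_cases hX : X ∈ C
        · exact hnb X Y ht hX
        by_cases hY : Y ∈ C
        · exact hnb Y X (by rw [Set.pair_comm]; exact ht) hY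
        exact two_class hA hTS C hCP hCne hCs2 c (hedgeD C subset_rfl eC1 eC2) X Y ht
          (fun h => hX (hClC h)) (fun h => hY (hClC h))
      · exact one_class_J hA hTS C hCP hCne hCs2 c (hedgeD C subset_rfl eC1 eC2)
          (fun X Y h => ht ⟨X, Y, h⟩)
          (fun l X hX Y hY hXl hYl hXC hYC => hss l ⟨hClC hXC, hXl⟩ ⟨hClC hYC, hYl⟩)
          (fun l Z hZ _ hZC j hj => absurd hj (hCs j))

lemma main_aux (hA : G.Assumption1) (hTS : G.TerminalSeparable) (hnf : ¬ G.Feasible) : G.CIR := by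
  by_cases hch : ∀ a b i P₁ P₂, G.Lambda {a} = {G.S i, P₁} → G.Lambda {b} = {P₁, P₂} → P₂ = G.S i
  · exfalso
    apply hnf
    by_cases hsh : ∀ a b Q P R, G.Lambda {a} = {Q, P} → G.Lambda {b} = {Q, R} → P = R
    · exact type_one hA hTS hsh
    · push Not at hsh
      obtain ⟨a, b, Q, P, R, h1, h2, h3⟩ := hsh
      exact case_B hA hTS hch h1 h2 h3
  · push Not at hch
    obtain ⟨a, b, i, P₁, P₂, h1, h2, h3⟩ := hch
    exact case_A hA hTS h1 h2 h3 hnf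

end final
end RegionGraph

/-- If a terminal-separable region graph with exactly three terminals
(satisfying Assumption 1) is not feasible, then condition (C-IR) holds. -/
theorem not_feasible_implies_CIR (G : RegionGraph 3)
    (hA : G.Assumption1) (hTS : G.TerminalSeparable)
    (hnf : ¬ G.Feasible) :
    G.CIR := by
  exact RegionGraph.main_aux hA hTS hnf

end SumNetworksPaper
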